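/- arXiv:1403.3464 — 4 statements merged into one kernel-verified Lean document; each statement's English description precedes it below -/
import Mathlib

section
/- Let 0 < c < 1 and ε > 0, and let k be a positive integer satisfying exp(ε²(k−1)/2) > k. If H is a finite graph on ℓ ≥ k vertices with minimum degree δ(H) ≥ c·ℓ, then there exists a subset S of the vertices of H with |S| = k such that the induced subgraph H[S] has minimum degree at least (c − ε)(k − 1). -/
/-!
Choose `S` uniformly among the `k`-subsets of the vertex set. For a fixed `v`, conditioned on
`v ∈ S`, the rest of `S` is a uniform `(k - 1)`-subset of the other vertices, so the number of
neighbours of `v` in `S` is hypergeometric with mean at least `c (k - 1)`. The factorial moments of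
a hypergeometric variable are at most those of the binomial variable with the same mean, hence so
is its moment generating function at positive arguments, and Hoeffding's bound applies: `v` has
fewer than `(c - ε) (k - 1)` neighbours in `S` with probability at most `exp (-2 ε² (k - 1))`.
As `S` has `k` elements and `k < exp (2 ε² (k - 1))`, some `S` contains no such `v`.
-/

open Finset MeasureTheory ProbabilityTheory

lemma choose_mul_pow_le_choose_mul_pow {b n : ℕ} (hbn : b ≤ n) (j : ℕ) :
    b.choose j * n ^ j ≤ n.choose j * b ^ j := by
  induction j with
  | zero => simp
  | succ j ih =>
    have hstep : (b - j) * n ≤ (n - j) * b := by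
      rw [Nat.sub_mul, Nat.sub_mul, Nat.mul_comm b n]
      gcongr
    refine le_of_mul_le_mul_right ?_ j.succ_pos
    calc b.choose (j + 1) * n ^ (j + 1) * (j + 1)
        = b.choose j * n ^ j * ((b - j) * n) := by
          linear_combination n ^ (j + 1) * Nat.choose_succ_right_eq b j
      _ ≤ n.choose j * b ^ j * ((n - j) * b) := by gcongr
      _ = n.choose (j + 1) * b ^ (j + 1) * (j + 1) := by
          linear_combination -(b ^ (j + 1) * Nat.choose_succ_right_eq n j)

lemma choose_le_choose_mul_div_pow {K : Type*} [Field K] [LinearOrder K] [IsStrictOrderedRing K]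
    {b n : ℕ} (hbn : b ≤ n) (j : ℕ) : (b.choose j : K) ≤ n.choose j * (b / n : K) ^ j := by
  obtain rfl | hn := n.eq_zero_or_pos
  · obtain rfl : b = 0 := by lia
    cases j <;> simp
  · rw [div_pow, mul_div_assoc', le_div_iff₀ (by positivity)]
    exact_mod_cast choose_mul_pow_le_choose_mul_pow hbn j

lemma one_add_pow_eq_sum_choose {R : Type*} [CommSemiring R] {n m : ℕ} (hnm : n ≤ m) (y : R) :
    (1 + y) ^ n = ∑ j ∈ range (m + 1), n.choose j * y ^ j := by
  rw [add_comm, add_pow]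
  simp only [one_pow, mul_one, mul_comm]
  refine sum_subset (by gcongr) fun j _ hj ↦ ?_
  rw [Nat.choose_eq_zero_of_lt (by simpa using hj), Nat.cast_zero, mul_zero]

lemma one_add_mul_exp_sub_one_le {q : ℝ} (hq : q ∈ Set.Icc 0 1) (t : ℝ) :
    1 + q * (Real.exp t - 1) ≤ Real.exp (t * q + t ^ 2 / 8) := by
  let μ := bernoulliMeasure (1 : ℝ) 0 ⟨q, hq⟩
  have hmem : ∀ᵐ x ∂μ, x ∈ Set.Icc (0 : ℝ) 1 :=
    ae_add_measure_iff.2 ⟨Measure.ae_smul_measure (by simp) _, Measure.ae_smul_measure (by simp) _⟩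
  have hmean : ∫ x, x ∂μ = q := by
    simp [μ, integral_bernoulliMeasure]
  have hmgf : mgf (fun x ↦ x - q) μ t = (1 + q * (Real.exp t - 1)) * Real.exp (-(t * q)) := by
    rw [mgf, integral_bernoulliMeasure, mul_sub, sub_eq_add_neg, Real.exp_add]
    simp only [mul_one, smul_eq_mul, zero_sub, mul_neg]
    ring
  have hoeffding := (hasSubgaussianMGF_of_mem_Icc aemeasurable_id hmem).mgf_le t
  simp only [id_eq, hmean, hmgf, Real.exp_neg, ← div_eq_mul_inv, div_le_iff₀ (Real.exp_pos _),
    ← Real.exp_add] at hoeffding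
  have hexponent :
      (((‖(1 : ℝ) - 0‖₊ / 2) ^ 2 : NNReal) : ℝ) * t ^ 2 / 2 + t * q = t * q + t ^ 2 / 8 := by
    rw [sub_zero, nnnorm_one]
    push_cast
    ring
  rwa [hexponent] at hoeffding

section Hypergeometric

variable {α : Type*} [DecidableEq α] {U B : Finset α}

lemma sum_choose_card_inter (hB : B ⊆ U) {j m : ℕ} (hj : j ≤ m) :
    ∑ T ∈ U.powersetCard m, (#(T ∩ B)).choose j = (#B).choose j * (#U - j).choose (m - j) := by
  calc ∑ T ∈ U.powersetCard m, (#(T ∩ B)).choose j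
      = ∑ T ∈ U.powersetCard m, #{A ∈ B.powersetCard j | A ⊆ T} := by
        refine sum_congr rfl fun T _ ↦ ?_
        rw [← card_powersetCard]
        congr 1
        ext A
        simp only [mem_powersetCard, mem_filter, subset_inter_iff]
        tauto
    _ = ∑ A ∈ B.powersetCard j, #{T ∈ U.powersetCard m | A ⊆ T} := by
        simp only [card_filter]
        exact sum_comm
    _ = ∑ _A ∈ B.powersetCard j, (#U - j).choose (m - j) := by
        refine sum_congr rfl fun A hA ↦ ?_
        obtain ⟨hAB, rfl⟩ := mem_powersetCard.1 hA
        exact card_filter_powersetCard_subset A U m (hAB.trans hB) hj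
    _ = (#B).choose j * (#U - j).choose (m - j) := by
        rw [sum_const, card_powersetCard, smul_eq_mul]

section Field

variable {K : Type*} [Field K] [LinearOrder K] [IsStrictOrderedRing K]

lemma sum_choose_card_inter_le (hB : B ⊆ U) {j m : ℕ} (hj : j ≤ m) :
    ∑ T ∈ U.powersetCard m, ((#(T ∩ B)).choose j : K) ≤
      (#U).choose m * (m.choose j * (#B / #U : K) ^ j) := by
  calc ∑ T ∈ U.powersetCard m, ((#(T ∩ B)).choose j : K)
      = (#B).choose j * (#U - j).choose (m - j) := by
        exact_mod_cast sum_choose_card_inter hB hj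
    _ ≤ (#U).choose j * (#B / #U : K) ^ j * (#U - j).choose (m - j) := by
        gcongr
        exact choose_le_choose_mul_div_pow (card_le_card hB) j
    _ = (#U).choose m * (m.choose j * (#B / #U : K) ^ j) := by
        have hchoose : ((#U).choose m * m.choose j : K) =
            (#U).choose j * (#U - j).choose (m - j) := by
          exact_mod_cast Nat.choose_mul hj
        linear_combination -(#B / #U : K) ^ j * hchoose

lemma sum_one_add_pow_card_inter_le (hB : B ⊆ U) (m : ℕ) {y : K} (hy : 0 ≤ y) :
    ∑ T ∈ U.powersetCard m, (1 + y) ^ #(T ∩ B) ≤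
      (#U).choose m * (1 + #B / #U * y) ^ m := by
  calc ∑ T ∈ U.powersetCard m, (1 + y) ^ #(T ∩ B)
      = ∑ T ∈ U.powersetCard m, ∑ j ∈ range (m + 1), (#(T ∩ B)).choose j * y ^ j := by
        refine sum_congr rfl fun T hT ↦ one_add_pow_eq_sum_choose ?_ y
        exact (card_le_card inter_subset_left).trans_eq (mem_powersetCard.1 hT).2
    _ = ∑ j ∈ range (m + 1), (∑ T ∈ U.powersetCard m, ((#(T ∩ B)).choose j : K)) * y ^ j := by
        rw [sum_comm]
        simp only [sum_mul]
    _ ≤ ∑ j ∈ range (m + 1), (#U).choose m * (m.choose j * (#B / #U : K) ^ j) * y ^ j := by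
        gcongr with j hj
        exact sum_choose_card_inter_le hB (mem_range_succ_iff.1 hj)
    _ = (#U).choose m * (1 + #B / #U * y) ^ m := by
        rw [one_add_pow_eq_sum_choose le_rfl, mul_sum]
        simp only [mul_pow, mul_assoc]

end Field

lemma sum_exp_mul_card_inter_le (hB : B ⊆ U) (m : ℕ) {t : ℝ} (ht : 0 ≤ t) :
    ∑ T ∈ U.powersetCard m, Real.exp (t * #(T ∩ B)) ≤
      (#U).choose m * Real.exp (m * (t * (#B / #U) + t ^ 2 / 8)) := by
  have hq : (#B / #U : ℝ) ∈ Set.Icc 0 1 :=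
    ⟨by positivity, div_le_one_of_le₀ (by exact_mod_cast card_le_card hB) (by positivity)⟩
  have hy : 0 ≤ Real.exp t - 1 := sub_nonneg.2 (Real.one_le_exp ht)
  calc ∑ T ∈ U.powersetCard m, Real.exp (t * #(T ∩ B))
      = ∑ T ∈ U.powersetCard m, (1 + (Real.exp t - 1)) ^ #(T ∩ B) := by
        simp only [add_sub_cancel, ← Real.exp_nat_mul, mul_comm]
    _ ≤ (#U).choose m * (1 + #B / #U * (Real.exp t - 1)) ^ m :=
        sum_one_add_pow_card_inter_le hB m hy
    _ ≤ (#U).choose m * Real.exp (m * (t * (#B / #U) + t ^ 2 / 8)) := by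
        rw [Real.exp_nat_mul]
        gcongr
        exact one_add_mul_exp_sub_one_le hq t

lemma card_filter_le_card_inter_le (hB : B ⊆ U) (m : ℕ) {ε : ℝ} (hε : 0 ≤ ε) :
    (#{T ∈ U.powersetCard m | (#B / #U + ε) * m ≤ (#(T ∩ B) : ℝ)} : ℝ) ≤
      (#U).choose m * Real.exp (-(2 * ε ^ 2 * m)) := by
  -- `t = 4 ε` minimises the exponent `t ^ 2 / 8 - t * ε` of the Chernoff bound.
  set t := 4 * ε with ht
  set large := {T ∈ U.powersetCard m | (#B / #U + ε) * m ≤ (#(T ∩ B) : ℝ)}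
  have markov : #large * Real.exp (t * ((#B / #U + ε) * m)) ≤
      (#U).choose m * Real.exp (m * (t * (#B / #U) + t ^ 2 / 8)) :=
    calc #large * Real.exp (t * ((#B / #U + ε) * m))
        = ∑ _T ∈ large, Real.exp (t * ((#B / #U + ε) * m)) := by rw [sum_const, nsmul_eq_mul]
      _ ≤ ∑ T ∈ large, Real.exp (t * #(T ∩ B)) := by
          gcongr with T hT
          exact (mem_filter.1 hT).2
      _ ≤ ∑ T ∈ U.powersetCard m, Real.exp (t * #(T ∩ B)) :=
          sum_le_sum_of_subset_of_nonneg (filter_subset _ _) fun _ _ _ ↦ by positivity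
      _ ≤ _ := sum_exp_mul_card_inter_le hB m (by positivity)
  rw [← le_div_iff₀ (Real.exp_pos _), mul_div_assoc, ← Real.exp_sub] at markov
  have hexponent : m * (t * (#B / #U) + t ^ 2 / 8) - t * ((#B / #U + ε) * m) =
      -(2 * ε ^ 2 * m) := by
    rw [ht]
    ring
  rwa [hexponent] at markov

lemma card_filter_card_inter_lt_le (hU : U.Nonempty) (hB : B ⊆ U) (m : ℕ) {ε : ℝ} (hε : 0 ≤ ε) :
    (#{T ∈ U.powersetCard m | (#(T ∩ B) : ℝ) < (#B / #U - ε) * m} : ℝ) ≤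
      (#U).choose m * Real.exp (-(2 * ε ^ 2 * m)) := by
  refine le_trans ?_ (card_filter_le_card_inter_le (U := U) (sdiff_subset (t := B)) m hε)
  have hcompl : (#(U \ B) / #U : ℝ) = 1 - #B / #U := by
    have : (#U : ℝ) ≠ 0 := by exact_mod_cast hU.card_ne_zero
    rw [cast_card_sdiff hB, sub_div, div_self this]
  gcongr with T hT
  intro hlt
  obtain ⟨hTU, rfl⟩ := mem_powersetCard.1 hT
  have hsplit : (#(T ∩ B) + #(T ∩ (U \ B)) : ℝ) = #T := by
    rw [← inter_sdiff_assoc, inter_eq_left.2 hTU]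
    exact_mod_cast card_inter_add_card_sdiff T B
  rw [hcompl]
  linarith

end Hypergeometric

lemma exists_card_eq_forall_not_erase {α : Type*} [DecidableEq α] {U : Finset α} {m : ℕ}
    (hm : m < #U) (P : α → Finset α → Prop) [∀ v, DecidablePred (P v)]
    (hP : ∀ v ∈ U,
      (m + 1) * #{T ∈ (U.erase v).powersetCard m | P v T} < (#U - 1).choose m) :
    ∃ S ⊆ U, #S = m + 1 ∧ ∀ v ∈ S, ¬ P v (S.erase v) := by
  by_contra! hbad
  let bad (v : α) : Finset (Finset α) := {T ∈ (U.erase v).powersetCard m | P v T}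
  have hcover : U.powersetCard (m + 1) ⊆ U.biUnion fun v ↦ (bad v).image (insert v) := by
    intro S hS
    obtain ⟨hSU, hSm⟩ := mem_powersetCard.1 hS
    obtain ⟨v, hvS, hv⟩ := hbad S hSU hSm
    refine mem_biUnion.2 ⟨v, hSU hvS, mem_image.2 ⟨S.erase v, ?_, insert_erase hvS⟩⟩
    refine mem_filter.2 ⟨mem_powersetCard.2 ⟨erase_subset_erase v hSU, ?_⟩, hv⟩
    rw [card_erase_of_mem hvS, hSm, Nat.add_sub_cancel]
  have hunion : (#U).choose (m + 1) ≤ ∑ v ∈ U, #(bad v) :=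
    calc (#U).choose (m + 1) = #(U.powersetCard (m + 1)) := (card_powersetCard _ _).symm
      _ ≤ ∑ v ∈ U, #((bad v).image (insert v)) := (card_le_card hcover).trans card_biUnion_le
      _ ≤ ∑ v ∈ U, #(bad v) := sum_le_sum fun _ _ ↦ card_image_le
  have hchoose : #U * (#U - 1).choose m = (m + 1) * (#U).choose (m + 1) := by
    have := Nat.add_one_mul_choose_eq (#U - 1) m
    rwa [Nat.sub_add_cancel (by lia), mul_comm _ (m + 1)] at this
  have : #U * (#U - 1).choose m < #U * (#U - 1).choose m :=
    calc #U * (#U - 1).choose m = (m + 1) * (#U).choose (m + 1) := hchoose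
      _ ≤ ∑ v ∈ U, (m + 1) * #(bad v) := by rw [← mul_sum]; gcongr
      _ < ∑ v ∈ U, (#U - 1).choose m := sum_lt_sum_of_nonempty (card_pos.1 (by lia)) hP
      _ = #U * (#U - 1).choose m := by rw [sum_const, smul_eq_mul]
  exact this.false

section Graph

variable {V : Type*} [Fintype V] (H : SimpleGraph V) [DecidableRel H.Adj]

lemma filter_adj_eq_erase_inter_neighborFinset [DecidableEq V] (S : Finset V) (v : V) :
    {w ∈ S | H.Adj v w} = S.erase v ∩ H.neighborFinset v := by
  ext w
  simp only [mem_filter, mem_inter, mem_erase, H.mem_neighborFinset]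
  exact ⟨fun h ↦ ⟨⟨h.2.ne', h.1⟩, h.2⟩, fun h ↦ ⟨h.1.2, h.2⟩⟩

lemma card_filter_card_inter_neighborFinset_lt_le [DecidableEq V] {c ε : ℝ} (hε : 0 ≤ ε) (m : ℕ)
    (hV : 1 < Fintype.card V) {v : V} (hv : c * (Fintype.card V - 1) ≤ H.degree v) :
    (#{T ∈ (univ.erase v).powersetCard m |
        (#(T ∩ H.neighborFinset v) : ℝ) < (c - ε) * m} : ℝ) ≤
      (Fintype.card V - 1).choose m * Real.exp (-(2 * ε ^ 2 * m)) := by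
  have hcard : #(univ.erase v) = Fintype.card V - 1 := card_erase_of_mem (mem_univ v)
  have hpos : 0 < #(univ.erase v) := by lia
  have hsub : H.neighborFinset v ⊆ univ.erase v := fun w hw ↦ by
    simpa using (H.ne_of_adj ((H.mem_neighborFinset v w).1 hw)).symm
  have hc : c ≤ #(H.neighborFinset v) / #(univ.erase v) := by
    rw [le_div_iff₀ (by exact_mod_cast hpos), hcard, Nat.cast_pred (by lia),
      H.card_neighborFinset_eq_degree]
    exact hv
  rw [← hcard]
  refine le_trans ?_ (card_filter_card_inter_lt_le (card_pos.1 hpos) hsub m hε)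
  gcongr

lemma add_one_mul_card_filter_card_inter_neighborFinset_lt [DecidableEq V] {c ε : ℝ} (hε : 0 ≤ ε)
    {m : ℕ} (hm : (m + 1 : ℝ) < Real.exp (2 * ε ^ 2 * m)) (hmV : m < Fintype.card V) {v : V}
    (hv : c * (Fintype.card V - 1) ≤ H.degree v) :
    (m + 1 : ℝ) * #{T ∈ (univ.erase v).powersetCard m |
        (#(T ∩ H.neighborFinset v) : ℝ) < (c - ε) * m} < (Fintype.card V - 1).choose m := by
  have hm0 : m ≠ 0 := by
    rintro rfl
    simp at hm
  have hexp : (m + 1) * Real.exp (-(2 * ε ^ 2 * m)) < 1 := by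
    rw [Real.exp_neg, ← div_eq_mul_inv]
    exact (div_lt_one (Real.exp_pos _)).2 hm
  have hchoose : (0 : ℝ) < (Fintype.card V - 1).choose m := by
    exact_mod_cast Nat.choose_pos (Nat.le_pred_of_lt hmV)
  calc (m + 1 : ℝ) * #{T ∈ (univ.erase v).powersetCard m |
          (#(T ∩ H.neighborFinset v) : ℝ) < (c - ε) * m}
      ≤ (m + 1) * ((Fintype.card V - 1).choose m * Real.exp (-(2 * ε ^ 2 * m))) := by
        gcongr
        exact card_filter_card_inter_neighborFinset_lt_le H hε m (by lia) hv
    _ = (Fintype.card V - 1).choose m * ((m + 1) * Real.exp (-(2 * ε ^ 2 * m))) :=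
        mul_left_comm _ _ _
    _ < (Fintype.card V - 1).choose m := mul_lt_of_lt_one_right hchoose hexp

theorem thinning_lemma_general {c ε : ℝ} (hε : 0 ≤ ε) {k : ℕ}
    (hk : (k : ℝ) < Real.exp (2 * ε ^ 2 * (k - 1))) (hkV : k ≤ Fintype.card V)
    (hdeg : ∀ v, c * (Fintype.card V - 1) ≤ H.degree v) :
    ∃ S : Finset V, #S = k ∧ ∀ v ∈ S, (c - ε) * (k - 1) ≤ (#{w ∈ S | H.Adj v w} : ℝ) := by
  classical
  obtain - | m := k
  · exact ⟨∅, by simp⟩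
  rw [Nat.cast_add_one, add_sub_cancel_right] at *
  obtain ⟨S, -, hSm, hS⟩ := exists_card_eq_forall_not_erase (U := univ) hkV
    (fun v T ↦ (#(T ∩ H.neighborFinset v) : ℝ) < (c - ε) * m) fun v _ ↦ by
      exact_mod_cast add_one_mul_card_filter_card_inter_neighborFinset_lt H hε hk hkV (hdeg v)
  refine ⟨S, hSm, fun v hv ↦ ?_⟩
  rw [filter_adj_eq_erase_inter_neighborFinset]
  exact not_lt.1 (hS v hv)

end Graph

theorem thinning_lemma {V : Type*} [Fintype V] [DecidableEq V]
    (H : SimpleGraph V) [DecidableRel H.Adj]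
    (c ε : ℝ) (hc0 : 0 < c) (hc1 : c < 1) (hε : 0 < ε) (k : ℕ) (hk : 0 < k)
    (hkexp : (k : ℝ) < Real.exp (ε ^ 2 * ((k : ℝ) - 1) / 2))
    (hℓ : k ≤ Fintype.card V)
    (hδ : ∀ v : V, c * (Fintype.card V : ℝ) ≤ (H.degree v : ℝ)) :
    ∃ S : Finset V, S.card = k ∧
      ∀ v ∈ S, (c - ε) * ((k : ℝ) - 1) ≤ ((S.filter (H.Adj v)).card : ℝ) := by
  have hk1 : (1 : ℝ) ≤ k := by exact_mod_cast hk
  have hexp : ε ^ 2 * ((k : ℝ) - 1) / 2 ≤ 2 * ε ^ 2 * (k - 1) := by nlinarith [sq_nonneg ε]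
  exact thinning_lemma_general H hε.le (hkexp.trans_le (Real.exp_le_exp.2 hexp)) hℓ
    fun v ↦ by linarith [hδ v]
end

section
/- There is a constant C > 0 such that for every nondecreasing nonnegative function ν and all sufficiently large k, there exists a graph G on at least C·k^{ν(k)²+1} vertices such that every induced subgraph H of G or of its complement on ℓ ≥ k vertices has minimum degree less than (1/2)(ℓ−1) + ν(ℓ)·√((ℓ−1)·ln ℓ). -/
open scoped Classical

/-!
In the binomial random graph `G(V, 1/2)`, a set `S` of `ℓ` vertices inducing minimum degree at least
`(ℓ - 1) / 2 + b` spans at least `ℓ * b / 2` more edges than expected. By Hoeffding's inequality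
this has probability at most `exp (-ℓ * b ^ 2 / (ℓ - 1))`, which is `(ℓ ^ (ν ℓ ^ 2)) ^ (-ℓ)` for
`b = ν ℓ * √((ℓ - 1) * log ℓ)`. The complement of the random graph has the same law, and there are
at most `(exp 1 * N / ℓ) ^ ℓ` sets of size `ℓ`, so for `N` a small multiple of `k ^ (ν k ^ 2 + 1)`
the union bound over all sets of size at least `k` is a geometric series with sum less than `1`.
-/

open MeasureTheory ProbabilityTheory SimpleGraph unitInterval Finset

namespace QuasiRamsey

section Hoeffding

variable {Ω : Type*} [MeasurableSpace Ω] {μ : Measure Ω}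

lemma hasSubgaussianMGF_indicator_sub_measureReal [IsProbabilityMeasure μ] {s : Set Ω}
    (hs : MeasurableSet s) :
    HasSubgaussianMGF (fun ω ↦ s.indicator 1 ω - μ.real s) (1 / 4) μ := by
  have h := hasSubgaussianMGF_of_mem_Icc (μ := μ) (X := s.indicator 1) (a := 0) (b := 1)
    (measurable_one.indicator hs).aemeasurable
    (.of_forall fun ω ↦ ⟨Set.indicator_nonneg (by simp) _, Set.indicator_le_self' (by simp) _⟩)
  rw [integral_indicator_one hs] at h
  convert h using 1
  norm_num

lemma measureReal_card_filter_ge_le_of_iIndepFun {ι : Type*} {A : ι → Ω → Prop}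
    (hindep : iIndepFun A μ) (hmeas : ∀ i, Measurable (A i)) (s : Finset ι) {a : ℝ} (ha : 0 ≤ a) :
    μ.real {ω | ∑ i ∈ s, μ.real {ω | A i ω} + a ≤ #{i ∈ s | A i ω}}
      ≤ Real.exp (-2 * a ^ 2 / #s) := by
  have := hindep.isProbabilityMeasure
  have hcentered : iIndepFun (fun i ω ↦ {ω | A i ω}.indicator 1 ω - μ.real {ω | A i ω}) μ :=
    hindep.comp (fun i q ↦ {q : Prop | q}.indicator (1 : Prop → ℝ) q - μ.real {ω | A i ω})
      fun _ ↦ .of_discrete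
  have hoeffding := HasSubgaussianMGF.measure_sum_ge_le_of_iIndepFun hcentered (s := s)
    (fun i _ ↦ hasSubgaussianMGF_indicator_sub_measureReal (hmeas i).setOf) ha
  convert hoeffding using 2
  · ext ω
    simp [Set.indicator_apply, le_sub_iff_add_le']
  · simp only [sum_const, nsmul_eq_mul, NNReal.coe_mul, NNReal.coe_natCast, NNReal.coe_div,
      NNReal.coe_one, NNReal.coe_ofNat]
    ring

end Hoeffding

section RandomSet

variable {ι : Type*}

lemma iIndepFun_map_measure {Ω Ω' : Type*} {β : ι → Type*} [MeasurableSpace Ω]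
    [MeasurableSpace Ω'] [∀ i, MeasurableSpace (β i)] {μ : Measure Ω} {φ : Ω → Ω'}
    {X : ∀ i, Ω' → β i} (hφ : Measurable φ) (hX : ∀ i, Measurable (X i))
    (h : iIndepFun (fun i ↦ X i ∘ φ) μ) : iIndepFun X (μ.map φ) := by
  have := h.isProbabilityMeasure
  have := Measure.isProbabilityMeasure_map (μ := μ) hφ.aemeasurable
  rw [iIndepFun_iff_map_fun_eq_infinitePi_map (by fun_prop)] at h ⊢
  simp_rw [Measure.map_map (hX _) hφ]
  rwa [Measure.map_map (by fun_prop) hφ]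

lemma iIndepFun_mem_setBernoulli (u : Set ι) (p : I) :
    iIndepFun (fun (i : ι) (s : Set ι) ↦ i ∈ s) setBer(u, p) := by
  rw [setBernoulli_eq_map]
  exact iIndepFun_map_measure (by fun_prop) (by fun_prop)
    (iIndepFun_infinitePi (X := fun _ q ↦ q) (by fun_prop))

lemma setBernoulli_real_mem {u : Set ι} (p : I) {i : ι} (hi : i ∈ u) :
    setBer(u, p).real {s | i ∈ s} = p := by
  have hmap : setBer(u, p).map (i ∈ ·) =
      toNNReal p • Measure.dirac (i ∈ u) + toNNReal (σ p) • Measure.dirac False := by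
    rw [setBernoulli_eq_map, Measure.map_map (by fun_prop) (by fun_prop)]
    exact Measure.infinitePi_map_eval _ i
  have hpre : {s : Set ι | i ∈ s} = (i ∈ ·) ⁻¹' {True} := by ext; simp
  rw [hpre, ← map_measureReal_apply (by fun_prop) .of_discrete, hmap]
  simp [measureReal_def, hi]

end RandomSet

section RandomGraph

variable {V : Type*}

lemma iIndepFun_mem_edgeSet_binomialRandom [Countable V] (p : I) :
    iIndepFun (fun (e : Sym2 V) (G : SimpleGraph V) ↦ e ∈ G.edgeSet) G(V, p) := by
  rw [binomialRandom_eq_map]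
  refine iIndepFun_map_measure (by fun_prop) (by fun_prop) ?_
  convert (iIndepFun_mem_setBernoulli Sym2.diagSetᶜ p).comp
    (fun (e : Sym2 V) q ↦ q ∧ ¬ e.IsDiag) (by fun_prop)
  ext
  simp

lemma binomialRandom_real_mem_edgeSet [Countable V] (p : I) {e : Sym2 V} (he : ¬ e.IsDiag) :
    G(V, p).real {G | e ∈ G.edgeSet} = p := by
  have hmeas : Measurable fun G : SimpleGraph V ↦ e ∈ G.edgeSet := by fun_prop
  rw [binomialRandom_eq_map, map_measureReal_apply (by fun_prop) hmeas.setOf]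
  simpa [he] using setBernoulli_real_mem (u := Sym2.diagSetᶜ) p he

lemma binomialRandom_real_card_filter_mem_edgeSet_ge_le [Countable V] (p : I)
    {E : Finset (Sym2 V)} (hE : ∀ e ∈ E, ¬ e.IsDiag) {a : ℝ} (ha : 0 ≤ a) :
    G(V, p).real {G | #E * (p : ℝ) + a ≤ #{e ∈ E | e ∈ G.edgeSet}}
      ≤ Real.exp (-2 * a ^ 2 / #E) := by
  have h := measureReal_card_filter_ge_le_of_iIndepFun (iIndepFun_mem_edgeSet_binomialRandom p)
    (fun e ↦ by fun_prop) E ha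
  rw [sum_congr rfl fun e he ↦ binomialRandom_real_mem_edgeSet p (hE e he), sum_const,
    nsmul_eq_mul] at h
  convert h

instance [Countable V] : MeasurableSingletonClass (SimpleGraph V) where
  measurableSet_singleton G := by
    rw [← measurableEmbedding_edgeSet.measurableSet_image, Set.image_singleton]
    exact measurableSet_singleton _

lemma ncard_edgeSet_add_ncard_edgeSet_compl [Finite V] (G : SimpleGraph V) :
    G.edgeSet.ncard + Gᶜ.edgeSet.ncard = (Nat.card V).choose 2 := by
  cases nonempty_fintype V
  rw [← Set.ncard_union_eq (disjoint_edgeSet.2 disjoint_compl_right), ← edgeSet_sup,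
    sup_compl_eq_top, edgeSet_top, Nat.card_eq_fintype_card, ← Sym2.card_diagSet_compl,
    Fintype.card_eq_nat_card, ← Nat.card_coe_set_eq]

lemma binomialRandom_map_compl [Finite V] (p : I) : G(V, p).map compl = G(V, σ p) := by
  refine Measure.ext_of_singleton fun G ↦ ?_
  have hpre : compl ⁻¹' {G} = {Gᶜ} := by
    ext H
    exact compl_eq_comm.trans eq_comm
  rw [Measure.map_apply .of_discrete (measurableSet_singleton G), hpre, binomialRandom_singleton,
    binomialRandom_singleton, ← ncard_edgeSet_add_ncard_edgeSet_compl G, symm_symm,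
    Nat.add_sub_cancel, Nat.add_sub_cancel_left, mul_comm]

end RandomGraph

section MinDegree

variable {V : Type*}

/-- The unordered pairs of distinct elements of `S`: the potential edges inside `S`. -/
noncomputable def pairs (S : Finset V) : Finset (Sym2 V) := S.offDiag.image Sym2.mk.uncurry

lemma not_isDiag_of_mem_pairs {S : Finset V} {e : Sym2 V} (he : e ∈ pairs S) : ¬ e.IsDiag := by
  obtain ⟨⟨a, b⟩, hab, rfl⟩ := mem_image.1 he
  exact (mem_offDiag.1 hab).2.2

lemma two_mul_card_pairs (S : Finset V) : 2 * (#(pairs S) : ℝ) = #S * (#S - 1) := by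
  have h : 2 * #(pairs S) = #S * #S - #S :=
    (Sym2.two_mul_card_image_offDiag S).trans (offDiag_card S)
  rw [mul_sub_one, ← Nat.cast_mul, ← Nat.cast_sub (Nat.le_mul_self _), ← h]
  push_cast
  rfl

/-- The graphs in which every vertex of `S` has at least `d` neighbours in `S`, that is, whose
induced subgraph on `S` has minimum degree at least `d`; all graphs if `S` is empty. -/
def minDegreeOnGE (S : Finset V) (d : ℝ) : Set (SimpleGraph V) :=
  {G | ∀ v ∈ S, d ≤ #{w ∈ S | G.Adj v w}}

lemma notMem_minDegreeOnGE_iff {G : SimpleGraph V} [DecidableRel G.Adj] {S : Finset V} {d : ℝ} :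
    G ∉ minDegreeOnGE S d ↔ ∃ v ∈ S, (#(S.filter (G.Adj v)) : ℝ) < d := by
  simp only [minDegreeOnGE, Set.mem_ofPred_eq, not_forall, not_le, exists_prop]
  congr!

lemma card_mul_le_two_mul_card_filter_mem_edgeSet {G : SimpleGraph V} {S : Finset V} {d : ℝ}
    (hG : G ∈ minDegreeOnGE S d) : #S * d ≤ 2 * #{e ∈ pairs S | e ∈ G.edgeSet} := by
  have hedges (v) (hv : v ∈ S) :
      #{w ∈ S | G.Adj v w} ≤ #({e ∈ pairs S | e ∈ G.edgeSet}.bipartiteAbove (· ∈ ·) v) := by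
    refine card_le_card_of_injOn (s(v, ·)) (fun w hw ↦ ?_) fun _ _ _ _ ↦ Sym2.congr_right.1
    obtain ⟨hwS, hvw⟩ := mem_filter.1 hw
    simp only [coe_bipartiteAbove, Set.mem_ofPred_eq, mem_filter]
    exact ⟨⟨mem_image.2 ⟨(v, w), mem_offDiag.2 ⟨hv, hwS, hvw.ne⟩, rfl⟩, hvw⟩,
      Sym2.mem_mk_left v w⟩
  have hends (e : Sym2 V) : #(S.bipartiteBelow (· ∈ ·) e) ≤ 2 :=
    calc #(S.bipartiteBelow (· ∈ ·) e) ≤ #e.toFinset := card_le_card fun v ↦ by simp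
      _ ≤ 2 := by rw [Sym2.card_toFinset]; split_ifs <;> simp
  have hcount := card_nsmul_le_card_nsmul (fun (v : V) (e : Sym2 V) ↦ v ∈ e) (n := 2)
    (fun v hv ↦ (hG v hv).trans (Nat.cast_le.2 (hedges v hv)))
    (fun e _ ↦ mod_cast hends e)
  simpa only [nsmul_eq_mul, mul_comm] using hcount

lemma binomialRandom_real_minDegreeOnGE_le [Countable V] (p : I) (S : Finset V) {b : ℝ}
    (hb : 0 ≤ b) :
    G(V, p).real (minDegreeOnGE S (p * (#S - 1) + b)) ≤ Real.exp (-#S * b ^ 2 / (#S - 1)) := by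
  have hpairs := two_mul_card_pairs S
  calc G(V, p).real (minDegreeOnGE S (p * (#S - 1) + b))
      ≤ G(V, p).real {G | #(pairs S) * (p : ℝ) + #S * b / 2
          ≤ #{e ∈ pairs S | e ∈ G.edgeSet}} := by
        refine measureReal_mono fun G hG ↦ ?_
        have := card_mul_le_two_mul_card_filter_mem_edgeSet hG
        rw [Set.mem_ofPred_eq]
        linear_combination this / 2 + p / 2 * hpairs
    _ ≤ Real.exp (-2 * (#S * b / 2) ^ 2 / #(pairs S)) :=
        binomialRandom_real_card_filter_mem_edgeSet_ge_le p (fun _ ↦ not_isDiag_of_mem_pairs)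
          (by positivity)
    _ = Real.exp (-#S * b ^ 2 / (#S - 1)) := by
        obtain hS | hS := eq_or_ne (#S : ℝ) 0
        · simp [hS]
        · rw [← mul_div_mul_left (-2 * _) _ two_ne_zero, hpairs,
            ← mul_div_mul_left (-#S * b ^ 2) _ hS]
          ring_nf

lemma binomialRandom_real_compl_mem_minDegreeOnGE_le [Finite V] (p : I) (S : Finset V) {b : ℝ}
    (hb : 0 ≤ b) :
    G(V, p).real {G | Gᶜ ∈ minDegreeOnGE S ((1 - p) * (#S - 1) + b)}
      ≤ Real.exp (-#S * b ^ 2 / (#S - 1)) := by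
  have h := binomialRandom_real_minDegreeOnGE_le (σ p) S hb
  rwa [coe_symm_eq, ← binomialRandom_map_compl, map_measureReal_apply .of_discrete .of_discrete]
    at h

end MinDegree

section UnionBound

variable {V : Type*} [Fintype V]

lemma sum_filter_le_card_le_of_choose_mul_le {f : ℕ → ℝ} {r : ℝ} {k : ℕ} (hr₀ : 0 ≤ r)
    (hr₁ : r < 1) (hf : ∀ l ≥ k, (Fintype.card V).choose l * f l ≤ r ^ l) :
    ∑ S : Finset V with k ≤ #S, f #S ≤ r ^ k / (1 - r) :=
  calc ∑ S : Finset V with k ≤ #S, f #S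
      = ∑ S ∈ (univ : Finset V).powerset, if k ≤ #S then f #S else 0 := by
        rw [sum_filter, powerset_univ]
    _ = ∑ l ∈ Ico k (Fintype.card V + 1), (Fintype.card V).choose l * f l := by
        rw [sum_powerset_apply_card (fun l ↦ if k ≤ l then f l else 0)]
        simp only [nsmul_eq_mul, mul_ite, mul_zero, ← sum_filter, card_univ]
        congr 1
        ext l
        simp [and_comm]
    _ ≤ ∑ l ∈ Ico k (Fintype.card V + 1), r ^ l :=
        sum_le_sum fun l hl ↦ hf l (mem_Ico.1 hl).1
    _ ≤ r ^ k / (1 - r) := geom_sum_Ico_le_of_lt_one hr₀ hr₁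

lemma exists_notMem_minDegreeOnGE (p : I) {b : ℕ → ℝ} {r : ℝ} {k : ℕ} (hb : ∀ l ≥ k, 0 ≤ b l)
    (hr₀ : 0 ≤ r) (hr₁ : r < 1)
    (hchoose : ∀ l ≥ k,
      (Fintype.card V).choose l * Real.exp (-l * b l ^ 2 / (l - 1)) ≤ r ^ l)
    (hsum : 2 * (r ^ k / (1 - r)) < 1) :
    ∃ G : SimpleGraph V, ∀ S : Finset V, k ≤ #S →
      G ∉ minDegreeOnGE S (p * (#S - 1) + b #S) ∧
        Gᶜ ∉ minDegreeOnGE S ((1 - p) * (#S - 1) + b #S) := by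
  set bad : Finset V → Set (SimpleGraph V) := fun S ↦
    minDegreeOnGE S (p * (#S - 1) + b #S) ∪
      {G | Gᶜ ∈ minDegreeOnGE S ((1 - p) * (#S - 1) + b #S)} with hbad
  have hbad_le (S : Finset V) (hS : k ≤ #S) :
      G(V, p).real (bad S) ≤ 2 * Real.exp (-#S * b #S ^ 2 / (#S - 1)) := by
    refine (measureReal_union_le _ _).trans ?_
    rw [two_mul]
    exact add_le_add (binomialRandom_real_minDegreeOnGE_le p S (hb _ hS))
      (binomialRandom_real_compl_mem_minDegreeOnGE_le p S (hb _ hS))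
  have hunion : G(V, p).real (⋃ S ∈ ({S | k ≤ #S} : Finset (Finset V)), bad S) < 1 :=
    calc G(V, p).real (⋃ S ∈ ({S | k ≤ #S} : Finset (Finset V)), bad S)
        ≤ ∑ S : Finset V with k ≤ #S, G(V, p).real (bad S) := measureReal_biUnion_finset_le _ _
      _ ≤ ∑ S : Finset V with k ≤ #S, 2 * Real.exp (-#S * b #S ^ 2 / (#S - 1)) :=
          sum_le_sum fun S hS ↦ hbad_le S (mem_filter.1 hS).2
      _ = 2 * ∑ S : Finset V with k ≤ #S, Real.exp (-#S * b #S ^ 2 / (#S - 1)) :=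
          (mul_sum _ _ _).symm
      _ ≤ 2 * (r ^ k / (1 - r)) := by
          gcongr
          exact sum_filter_le_card_le_of_choose_mul_le
            (f := fun l ↦ Real.exp (-l * b l ^ 2 / (l - 1))) hr₀ hr₁ hchoose
      _ < 1 := hsum
  obtain ⟨G, hG⟩ : ∃ G, G ∉ ⋃ S ∈ ({S | k ≤ #S} : Finset (Finset V)), bad S := by
    by_contra! hall
    rw [Set.eq_univ_of_forall hall, probReal_univ] at hunion
    exact hunion.false
  simp only [Set.mem_iUnion, mem_filter, mem_univ, true_and, exists_prop, not_exists, not_and,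
    hbad, Set.mem_union, not_or, Set.mem_ofPred_eq] at hG
  exact ⟨G, hG⟩

end UnionBound

section Numerics

lemma choose_le_exp_one_mul_div_pow (n l : ℕ) :
    (n.choose l : ℝ) ≤ (Real.exp 1 * n / l) ^ l := by
  obtain rfl | hl := l.eq_zero_or_pos
  · simp
  have hl' : (0 : ℝ) < l := by exact_mod_cast hl
  have hfactorial : (l : ℝ) ^ l / l.factorial ≤ Real.exp 1 ^ l := by
    rw [← Real.exp_nat_mul, mul_one]
    exact Real.pow_div_factorial_le_exp l hl'.le l
  calc (n.choose l : ℝ) ≤ n ^ l / l.factorial := Nat.choose_le_pow_div l n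
    _ = (l : ℝ) ^ l / l.factorial * (n / l) ^ l := by rw [div_pow]; field_simp
    _ ≤ Real.exp 1 ^ l * (n / l) ^ l := by gcongr
    _ = (Real.exp 1 * n / l) ^ l := by rw [mul_div_assoc, mul_pow]

lemma exp_neg_mul_sq_mul_sqrt_div {l : ℕ} (hl : 2 ≤ l) (x : ℝ) :
    Real.exp (-l * (x * √((l - 1) * Real.log l)) ^ 2 / (l - 1)) = ((l : ℝ) ^ x ^ 2)⁻¹ ^ l := by
  have hl' : (2 : ℝ) ≤ l := by exact_mod_cast hl
  have hsub : (0 : ℝ) < l - 1 := by linarith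
  rw [mul_pow, Real.sq_sqrt (mul_nonneg hsub.le (Real.log_natCast_nonneg l)),
    Real.rpow_def_of_pos (by linarith), ← Real.exp_neg, ← Real.exp_nat_mul]
  congr 1
  field_simp

lemma choose_mul_exp_le_half_pow {N l : ℕ} {x : ℝ} (hl : 2 ≤ l)
    (hN : 6 * (N : ℝ) ≤ (l : ℝ) ^ (x ^ 2 + 1)) :
    N.choose l * Real.exp (-l * (x * √((l - 1) * Real.log l)) ^ 2 / (l - 1)) ≤ (1 / 2) ^ l := by
  have hl' : (0 : ℝ) < l := by exact_mod_cast (by lia : 0 < l)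
  have hratio : Real.exp 1 * N / l * ((l : ℝ) ^ x ^ 2)⁻¹ ≤ 1 / 2 := by
    rw [← div_eq_mul_inv, div_div, ← Real.rpow_one_add' hl'.le (by positivity), add_comm,
      div_le_iff₀ (by positivity)]
    calc Real.exp 1 * N ≤ 3 * N := by gcongr; exact Real.exp_one_lt_three.le
      _ ≤ 1 / 2 * (l : ℝ) ^ (x ^ 2 + 1) := by linarith
  calc N.choose l * Real.exp (-l * (x * √((l - 1) * Real.log l)) ^ 2 / (l - 1))
      ≤ (Real.exp 1 * N / l) ^ l * ((l : ℝ) ^ x ^ 2)⁻¹ ^ l := by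
        rw [exp_neg_mul_sq_mul_sqrt_div hl]
        gcongr
        exact choose_le_exp_one_mul_div_pow N l
    _ = (Real.exp 1 * N / l * ((l : ℝ) ^ x ^ 2)⁻¹) ^ l := (mul_pow _ _ _).symm
    _ ≤ (1 / 2) ^ l := by gcongr

lemma natCast_rpow_sq_add_one_le {k l : ℕ} {x y : ℝ} (hk : 1 ≤ k) (hkl : k ≤ l) (hx : 0 ≤ x)
    (hxy : x ≤ y) : (k : ℝ) ^ (x ^ 2 + 1) ≤ (l : ℝ) ^ (y ^ 2 + 1) := by
  have hl : (1 : ℝ) ≤ l := by exact_mod_cast hk.trans hkl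
  calc (k : ℝ) ^ (x ^ 2 + 1) ≤ (l : ℝ) ^ (x ^ 2 + 1) := by gcongr
    _ ≤ (l : ℝ) ^ (y ^ 2 + 1) := by gcongr

end Numerics

lemma exists_notMem_minDegreeOnGE_half {V : Type*} [Fintype V] {k : ℕ} (hk : 3 ≤ k) {ν : ℕ → ℝ}
    (hν : ∀ l ≥ k, 0 ≤ ν l) (hV : ∀ l ≥ k, 6 * (Fintype.card V : ℝ) ≤ (l : ℝ) ^ (ν l ^ 2 + 1)) :
    ∃ G : SimpleGraph V, ∀ S : Finset V, k ≤ #S →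
      G ∉ minDegreeOnGE S ((#S - 1) / 2 + ν #S * √((#S - 1) * Real.log #S)) ∧
        Gᶜ ∉ minDegreeOnGE S ((#S - 1) / 2 + ν #S * √((#S - 1) * Real.log #S)) := by
  have hsum : 2 * ((1 / 2 : ℝ) ^ k / (1 - 1 / 2)) < 1 := by
    calc 2 * ((1 / 2 : ℝ) ^ k / (1 - 1 / 2)) ≤ 2 * ((1 / 2) ^ 3 / (1 - 1 / 2)) := by
          gcongr 2 * (?_ / _)
          exact pow_le_pow_of_le_one (by norm_num) (by norm_num) hk
      _ < 1 := by norm_num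
  obtain ⟨G, hG⟩ := exists_notMem_minDegreeOnGE (V := V) ⟨1 / 2, by norm_num, by norm_num⟩
    (b := fun l ↦ ν l * √((l - 1) * Real.log l))
    (fun l hl ↦ mul_nonneg (hν l hl) (Real.sqrt_nonneg _)) (by norm_num) (by norm_num)
    (fun l hl ↦ choose_mul_exp_le_half_pow (by lia) (hV l hl)) hsum
  simp only [sub_half, one_div_mul_eq_div] at hG
  exact ⟨G, hG⟩

end QuasiRamsey

theorem quasi_ramsey_random_lower_bound :
    ∃ C : ℝ, 0 < C ∧ ∀ ν : ℕ → ℝ, Monotone ν → (∀ ℓ, 0 ≤ ν ℓ) →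
      ∀ᶠ k : ℕ in Filter.atTop, ∃ N : ℕ, ∃ G : SimpleGraph (Fin N),
        C * (k : ℝ) ^ (ν k ^ 2 + 1) ≤ (N : ℝ) ∧
        ∀ S : Finset (Fin N), k ≤ S.card →
          (∃ v ∈ S, ((S.filter (G.Adj v)).card : ℝ) <
              ((S.card : ℝ) - 1) / 2 +
                ν S.card * Real.sqrt (((S.card : ℝ) - 1) * Real.log (S.card : ℝ))) ∧
          (∃ v ∈ S, ((S.filter (Gᶜ.Adj v)).card : ℝ) <
              ((S.card : ℝ) - 1) / 2 +
                ν S.card * Real.sqrt (((S.card : ℝ) - 1) * Real.log (S.card : ℝ))) := by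
  refine ⟨1 / 12, by norm_num, fun ν hmono hν ↦ ?_⟩
  filter_upwards [Filter.eventually_ge_atTop 12] with k hk
  set X : ℝ := (k : ℝ) ^ (ν k ^ 2 + 1)
  set N : ℕ := ⌈1 / 12 * X⌉₊
  have hX : 12 ≤ X :=
    calc (12 : ℝ) ≤ k := mod_cast hk
      _ ≤ X := Real.self_le_rpow_of_one_le (mod_cast by lia) (by linarith [sq_nonneg (ν k)])
  have hN : 6 * (N : ℝ) ≤ X := by linarith [Nat.ceil_lt_add_one (a := 1 / 12 * X) (by linarith)]
  obtain ⟨G, hG⟩ := QuasiRamsey.exists_notMem_minDegreeOnGE_half (V := Fin N) (k := k) (by lia)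
    (fun l _ ↦ hν l) fun l hl ↦ by
      rw [Fintype.card_fin]
      exact hN.trans (QuasiRamsey.natCast_rpow_sq_add_one_le (by lia) hl (hν k) (hmono hl))
  simp only [QuasiRamsey.notMem_minDegreeOnGE_iff] at hG
  exact ⟨N, G, Nat.le_ceil _, hG⟩
end

section
/- Fix ν ≥ 0 and c > 4/3. For all sufficiently large k, every graph G on at least k^{c·10⁶·ν² + 4/3} vertices satisfies: G or its complement contains an induced subgraph H on ℓ ≥ k vertices with minimum degree at least (1/2)(ℓ−1) + ν·√((ℓ−1)·ln ℓ). -/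
open scoped Classical

/-!
Let `M` be the symmetric `±1` matrix of the graph and let `D(S)` be the sum of its entries in the
block `S × S`. If `X` maximizes `D`, then deleting a vertex cannot increase `D`, so every row sum of
`X × X` is nonnegative: every degree in `X` is at least half. If instead `X` maximizes `|D|` minus
four `ν` times the penalty `|X| ^ {3/2} √(ln |X|)`, every row sum exceeds the decrement of the
penalty, which is the required excess, in the graph or in its complement according to the sign of
`D(X)`. The maximum is large, and hence so is `X`, because of the Erdős–Spencer phenomenon: for a
small set `W` cut into `q` blocks, a sum of the entries of a row over `W` with random signs is as
large as `√b / 4` on every block of size `b` with probability at least `7⁻¹ ^ q`, so one choice of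
signs works for many rows at once. Taking `q` of order `ν² ln k` makes `D` beat the penalty, at the
price of a factor `7 ^ q = k ^ O(ν²)` in the number of vertices.

For `ν = 0` the order `k ^ {4/3}` leaves no room for the constants lost in this argument. If all
maximizers were smaller than `k`, one could remove maximizers of `D` one after another; each is
negatively correlated with everything outside it, so `D` of their union would decrease quadratically
in the number of steps and eventually violate the bound `|D| ≤ k²`, which holds since a set with
`|D| > k²` already leads to a maximizer of `|D|` with more than `k` vertices.
-/

namespace QuasiRamsey

open Finset

section SignedSum

variable {α : Type*} (τ : α → ℝ)

/-- The signed sum `∑ i ∈ s, ± τ i` with sign `+` on `t` and `-` on `s \ t`. Letting `t` range over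
`s.powerset` encodes a uniformly random choice of signs. -/
noncomputable def signedSum (s t : Finset α) : ℝ := ∑ i ∈ t, τ i - ∑ i ∈ s \ t, τ i

lemma signedSum_union {s₁ s₂ t₁ t₂ : Finset α} (hs : Disjoint s₁ s₂) (h₁ : t₁ ⊆ s₁)
    (h₂ : t₂ ⊆ s₂) :
    signedSum τ (s₁ ∪ s₂) (t₁ ∪ t₂) = signedSum τ s₁ t₁ + signedSum τ s₂ t₂ := by
  have hsdiff : (s₁ ∪ s₂) \ (t₁ ∪ t₂) = s₁ \ t₁ ∪ s₂ \ t₂ := by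
    ext i
    have hi : i ∈ s₁ → i ∉ s₂ := fun hi => disjoint_left.1 hs hi
    have hi₁ : i ∈ t₁ → i ∈ s₁ := fun hi => h₁ hi
    have hi₂ : i ∈ t₂ → i ∈ s₂ := fun hi => h₂ hi
    simp only [mem_sdiff, mem_union]
    tauto
  simp only [signedSum, hsdiff, sum_union (hs.mono h₁ h₂),
    sum_union (hs.mono sdiff_subset sdiff_subset)]
  ring

lemma signedSum_insert {s t : Finset α} {a : α} (ha : a ∉ s) (ht : t ⊆ s) :
    signedSum τ (insert a s) t = signedSum τ s t - τ a := by
  have := signedSum_union τ (disjoint_singleton_left.2 ha) (empty_subset {a}) ht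
  rw [empty_union, ← insert_eq] at this
  rw [this, add_comm, sub_eq_add_neg]
  simp [signedSum]

lemma signedSum_insert_insert {s t : Finset α} {a : α} (ha : a ∉ s) (ht : t ⊆ s) :
    signedSum τ (insert a s) (insert a t) = signedSum τ s t + τ a := by
  have := signedSum_union τ (disjoint_singleton_left.2 ha) (Subset.refl {a}) ht
  rw [← insert_eq, ← insert_eq] at this
  rw [this, add_comm]
  simp [signedSum]

lemma signedSum_sdiff {s t : Finset α} (ht : t ⊆ s) :
    signedSum τ s (s \ t) = -signedSum τ s t := by
  rw [signedSum, signedSum, Finset.sdiff_sdiff_eq_self ht, neg_sub]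

lemma sum_powerset_signedSum_sq (s : Finset α) :
    ∑ t ∈ s.powerset, signedSum τ s t ^ 2 = 2 ^ #s * ∑ i ∈ s, τ i ^ 2 := by
  induction s using Finset.induction_on with
  | empty => simp [signedSum]
  | insert a s ha ih =>
    have hpair : ∀ t ∈ s.powerset,
        signedSum τ (insert a s) t ^ 2 + signedSum τ (insert a s) (insert a t) ^ 2 =
          2 * signedSum τ s t ^ 2 + 2 * τ a ^ 2 := fun t ht => by
      rw [mem_powerset] at ht
      rw [signedSum_insert τ ha ht, signedSum_insert_insert τ ha ht]
      ring
    rw [sum_powerset_insert ha, ← sum_add_distrib, sum_congr rfl hpair, sum_add_distrib,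
      ← mul_sum, ih, sum_const, card_powerset, card_insert_of_notMem ha, sum_insert ha]
    simp only [nsmul_eq_mul, Nat.cast_pow, Nat.cast_ofNat]
    ring

lemma sum_powerset_signedSum_pow_four_le (s : Finset α) :
    ∑ t ∈ s.powerset, signedSum τ s t ^ 4 ≤ 2 ^ #s * (3 * (∑ i ∈ s, τ i ^ 2) ^ 2) := by
  induction s using Finset.induction_on with
  | empty => simp [signedSum]
  | insert a s ha ih =>
    have hpair : ∀ t ∈ s.powerset,
        signedSum τ (insert a s) t ^ 4 + signedSum τ (insert a s) (insert a t) ^ 4 =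
          2 * signedSum τ s t ^ 4 + 12 * τ a ^ 2 * signedSum τ s t ^ 2 + 2 * τ a ^ 4 :=
      fun t ht => by
      rw [mem_powerset] at ht
      rw [signedSum_insert τ ha ht, signedSum_insert_insert τ ha ht]
      ring
    rw [sum_powerset_insert ha, ← sum_add_distrib, sum_congr rfl hpair, sum_add_distrib,
      sum_add_distrib, ← mul_sum, ← mul_sum, sum_powerset_signedSum_sq, sum_const, card_powerset,
      card_insert_of_notMem ha, sum_insert ha]
    simp only [nsmul_eq_mul, Nat.cast_pow, Nat.cast_ofNat]
    have : 0 ≤ 2 ^ #s * τ a ^ 4 := by positivity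
    linear_combination 2 * ih + 4 * this

/-- The **Paley–Zygmund inequality** for the uniform distribution on `s`, before normalization. -/
lemma sq_sum_sub_le_card_filter_mul_sum_sq {ι : Type*} (s : Finset ι) (f : ι → ℝ) {a : ℝ}
    (ha : 0 ≤ a) (hf : #s * a ≤ ∑ i ∈ s, f i) :
    (∑ i ∈ s, f i - #s * a) ^ 2 ≤ #{i ∈ s | a ≤ f i} * ∑ i ∈ s, f i ^ 2 := by
  have hsmall : ∑ i ∈ s with ¬a ≤ f i, f i ≤ #s * a := calc
    ∑ i ∈ s with ¬a ≤ f i, f i ≤ ∑ i ∈ s with ¬a ≤ f i, a :=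
      sum_le_sum fun i hi => (not_le.1 (mem_filter.1 hi).2).le
    _ ≤ #s * a := by
      rw [sum_const, nsmul_eq_mul]
      gcongr
      exact filter_subset _ _
  have hlarge : ∑ i ∈ s, f i - #s * a ≤ ∑ i ∈ s with a ≤ f i, f i := by
    linarith [sum_filter_add_sum_filter_not s (fun i => a ≤ f i) f]
  calc (∑ i ∈ s, f i - #s * a) ^ 2
      ≤ (∑ i ∈ s with a ≤ f i, f i) ^ 2 := pow_le_pow_left₀ (sub_nonneg.2 hf) hlarge 2
    _ ≤ #{i ∈ s | a ≤ f i} * ∑ i ∈ s with a ≤ f i, f i ^ 2 := sq_sum_le_card_mul_sum_sq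
    _ ≤ #{i ∈ s | a ≤ f i} * ∑ i ∈ s, f i ^ 2 := by
      gcongr
      exact filter_subset _ _

lemma card_filter_le_neg_signedSum (s : Finset α) (a : ℝ) :
    #{t ∈ s.powerset | a ≤ -signedSum τ s t} = #{t ∈ s.powerset | a ≤ signedSum τ s t} := by
  refine card_nbij' (s \ ·) (s \ ·) ?_ ?_ ?_ ?_ <;> intro t ht <;>
    simp only [coe_filter, mem_powerset, Set.mem_ofPred_eq] at ht ⊢
  · exact ⟨sdiff_subset, by rw [signedSum_sdiff τ ht.1]; exact ht.2⟩
  · exact ⟨sdiff_subset, by rw [signedSum_sdiff τ ht.1, neg_neg]; exact ht.2⟩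
  · exact Finset.sdiff_sdiff_eq_self ht.1
  · exact Finset.sdiff_sdiff_eq_self ht.1

lemma card_filter_sq_signedSum_le (s : Finset α) {a : ℝ} (ha : 0 ≤ a) :
    #{t ∈ s.powerset | a ^ 2 ≤ signedSum τ s t ^ 2} ≤
      2 * #{t ∈ s.powerset | a ≤ signedSum τ s t} := by
  have hsplit : {t ∈ s.powerset | a ^ 2 ≤ signedSum τ s t ^ 2} =
      {t ∈ s.powerset | a ≤ signedSum τ s t} ∪ {t ∈ s.powerset | a ≤ -signedSum τ s t} := by
    rw [← filter_or]
    refine filter_congr fun t _ => ?_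
    rw [sq_le_sq, abs_of_nonneg ha, le_abs]
  rw [hsplit, two_mul]
  exact (card_union_le _ _).trans_eq (by rw [card_filter_le_neg_signedSum])

lemma two_pow_card_div_seven_le_card_filter (s : Finset α) :
    (2 : ℝ) ^ #s / 7 ≤ #{t ∈ s.powerset | √(∑ i ∈ s, τ i ^ 2) / 4 ≤ signedSum τ s t} := by
  set v := ∑ i ∈ s, τ i ^ 2 with hv
  have hv₀ : 0 ≤ v := sum_nonneg fun i _ => sq_nonneg _
  have hsq := sum_powerset_signedSum_sq τ s
  have hcard : (#s.powerset : ℝ) = 2 ^ #s := by simp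
  have hpow : (0 : ℝ) < 2 ^ #s := by positivity
  have hsplit : (#{t ∈ s.powerset | (√v / 4) ^ 2 ≤ signedSum τ s t ^ 2} : ℝ) ≤
      2 * #{t ∈ s.powerset | √v / 4 ≤ signedSum τ s t} := by
    exact_mod_cast card_filter_sq_signedSum_le τ s (by positivity : 0 ≤ √v / 4)
  rw [div_pow, Real.sq_sqrt hv₀] at hsplit
  rcases hv₀.eq_or_lt with hv₀ | hv₀
  · rw [← hv₀] at hsplit ⊢
    rw [filter_true_of_mem fun t _ => by rw [zero_div]; positivity, hcard] at hsplit
    linarith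
  have hPZ := sq_sum_sub_le_card_filter_mul_sum_sq s.powerset (fun t => signedSum τ s t ^ 2)
    (by positivity : 0 ≤ v / 4 ^ 2) (by rw [hsq, hcard]; gcongr; linarith)
  simp only [hsq, hcard, ← pow_mul] at hPZ
  have hfour := hPZ.trans (mul_le_mul_of_nonneg_left (sum_powerset_signedSum_pow_four_le τ s)
    (Nat.cast_nonneg _))
  rw [← hv] at hfour
  have : 2 ^ #s * (75 / 256) ≤ (#{t ∈ s.powerset | v / 4 ^ 2 ≤ signedSum τ s t ^ 2} : ℝ) := by
    refine le_of_mul_le_mul_right ?_ (by positivity : 0 < 2 ^ #s * (3 * v ^ 2))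
    linear_combination hfour
  linarith

lemma card_filter_signedSum_mul_le {s₁ s₂ : Finset α} (hs : Disjoint s₁ s₂) (a₁ a₂ : ℝ) :
    #{t ∈ s₁.powerset | a₁ ≤ signedSum τ s₁ t} * #{t ∈ s₂.powerset | a₂ ≤ signedSum τ s₂ t} ≤
      #{t ∈ (s₁ ∪ s₂).powerset | a₁ + a₂ ≤ signedSum τ (s₁ ∪ s₂) t} := by
  rw [← card_product]
  refine card_le_card_of_injOn (fun t => t.1 ∪ t.2) ?_ ?_
  · rintro ⟨t₁, t₂⟩ ht
    simp only [coe_product, coe_filter, mem_powerset, Set.mem_prod, Set.mem_ofPred_eq] at ht ⊢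
    obtain ⟨⟨h₁, ha₁⟩, h₂, ha₂⟩ := ht
    exact ⟨union_subset_union h₁ h₂, by rw [signedSum_union τ hs h₁ h₂]; gcongr⟩
  · rintro ⟨t₁, t₂⟩ ht ⟨u₁, u₂⟩ hu htu
    simp only [coe_product, coe_filter, mem_powerset, Set.mem_prod, Set.mem_ofPred_eq]
      at ht hu htu
    have hrestrict : ∀ {v₁ v₂ : Finset α}, v₁ ⊆ s₁ → v₂ ⊆ s₂ →
        (v₁ ∪ v₂) ∩ s₁ = v₁ ∧ (v₁ ∪ v₂) ∩ s₂ = v₂ := fun h₁ h₂ => by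
      rw [union_inter_distrib_right, union_inter_distrib_right, inter_eq_left.2 h₁,
        inter_eq_left.2 h₂, disjoint_iff_inter_eq_empty.1 (hs.mono_left h₁),
        disjoint_iff_inter_eq_empty.1 (hs.symm.mono_left h₂)]
      simp
    have ht' := hrestrict ht.1.1 ht.2.1
    have hu' := hrestrict hu.1.1 hu.2.1
    rw [htu] at ht'
    exact Prod.ext (ht'.1.symm.trans hu'.1) (ht'.2.symm.trans hu'.2)

/-- If `s` is cut into `q` blocks of size `b`, then with probability at least `7⁻¹ ^ q` every block
has a signed sum of at least `√b / 4`. -/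
lemma pow_le_card_filter_signedSum (q b : ℕ) {s : Finset α} (hs : #s = q * b)
    (hτ : ∀ i ∈ s, τ i ^ 2 = 1) :
    ((2 : ℝ) ^ b / 7) ^ q ≤ #{t ∈ s.powerset | q * (√b / 4) ≤ signedSum τ s t} := by
  induction q generalizing s with
  | zero =>
    obtain rfl : s = ∅ := by simpa using hs
    simp [signedSum, filter_singleton]
  | succ q ih =>
    obtain ⟨s₁, h₁, hcard₁⟩ := exists_subset_card_eq (show b ≤ #s by rw [hs]; nlinarith)
    have hcard₂ : #(s \ s₁) = q * b := by
      rw [card_sdiff_of_subset h₁, hs, hcard₁, Nat.succ_mul, Nat.add_sub_cancel]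
    have hblock := two_pow_card_div_seven_le_card_filter τ s₁
    rw [sum_congr rfl fun i hi => hτ i (h₁ hi), sum_const, nsmul_one, hcard₁] at hblock
    have hrest := ih hcard₂ fun i hi => hτ i (sdiff_subset hi)
    have hmul := card_filter_signedSum_mul_le τ (disjoint_sdiff (s := s₁) (t := s)) (√b / 4)
      (q * (√b / 4))
    rw [union_sdiff_of_subset h₁] at hmul
    calc ((2 : ℝ) ^ b / 7) ^ (q + 1) = 2 ^ b / 7 * (2 ^ b / 7) ^ q := pow_succ' _ _
      _ ≤ _ * _ := mul_le_mul hblock hrest (by positivity) (by positivity)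
      _ ≤ _ := by
        rw [Nat.cast_succ, add_one_mul, add_comm (_ * _)]
        exact_mod_cast hmul

end SignedSum

lemma exists_mul_card_le_card_filter {α β : Type*} (r : α → β → Prop) (s : Finset α)
    {t : Finset β} (ht : t.Nonempty) {δ : ℝ} (h : ∀ a ∈ s, δ * #t ≤ #{b ∈ t | r a b}) :
    ∃ b ∈ t, δ * #s ≤ #{a ∈ s | r a b} := by
  refine exists_le_of_sum_le ht ?_
  calc ∑ _ ∈ t, δ * #s = ∑ _ ∈ s, δ * #t := by simp only [sum_const, nsmul_eq_mul]; ring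
    _ ≤ ∑ a ∈ s, (#{b ∈ t | r a b} : ℝ) := sum_le_sum h
    _ = ∑ b ∈ t, (#{a ∈ s | r a b} : ℝ) :=
      mod_cast sum_card_bipartiteAbove_eq_sum_card_bipartiteBelow r

section BlockSum

variable {V : Type*} {M : Matrix V V ℝ}

/-- The sum of the entries of `M` in the block `A × B`. For the sign matrix of a graph, and up to a
factor `4`, `blockSum M S S` is the discrepancy `D(S)` of Erdős and Spencer. -/
def blockSum (M : Matrix V V ℝ) (A B : Finset V) : ℝ := ∑ u ∈ A, ∑ v ∈ B, M u v

lemma blockSum_neg (M : Matrix V V ℝ) (A B : Finset V) :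
    blockSum (-M) A B = -blockSum M A B := by
  simp [blockSum]

lemma blockSum_union_left (M : Matrix V V ℝ) {A B : Finset V} (hAB : Disjoint A B)
    (C : Finset V) : blockSum M (A ∪ B) C = blockSum M A C + blockSum M B C :=
  sum_union hAB

lemma blockSum_comm (hM : M.IsSymm) (A B : Finset V) : blockSum M A B = blockSum M B A := by
  refine sum_comm.trans (sum_congr rfl fun v _ => sum_congr rfl fun u _ => hM.apply v u)

lemma blockSum_union_self (hM : M.IsSymm) {A B : Finset V} (hAB : Disjoint A B) :
    blockSum M (A ∪ B) (A ∪ B) = blockSum M A A + blockSum M B B + 2 * blockSum M A B := by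
  rw [blockSum_union_left M hAB, blockSum_comm hM A, blockSum_comm hM B,
    blockSum_union_left M hAB, blockSum_union_left M hAB, blockSum_comm hM B A]
  ring

lemma blockSum_self_eq_erase_add (hM : M.IsSymm) (hdiag : M.diag = 0) {X : Finset V} {v : V}
    (hv : v ∈ X) :
    blockSum M X X = blockSum M (X.erase v) (X.erase v) + 2 * ∑ u ∈ X, M v u := by
  have hvv : M v v = 0 := congrFun hdiag v
  have hunion := blockSum_union_self hM (disjoint_singleton_left.2 (notMem_erase v X))
  rw [← insert_eq, insert_erase hv] at hunion
  rw [hunion, ← add_sum_erase X _ hv]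
  simp only [blockSum, sum_singleton, hvv]
  ring

lemma abs_blockSum_self_le (hle : ∀ u v, |M u v| ≤ 1) (A : Finset V) :
    |blockSum M A A| ≤ (#A : ℝ) ^ 2 := calc
  |blockSum M A A| ≤ ∑ u ∈ A, ∑ v ∈ A, |M u v| :=
    (abs_sum_le_sum_abs _ _).trans (sum_le_sum fun _ _ => abs_sum_le_sum_abs _ _)
  _ ≤ ∑ _ ∈ A, ∑ _ ∈ A, (1 : ℝ) := sum_le_sum fun _ _ => sum_le_sum fun _ _ => hle _ _
  _ = (#A : ℝ) ^ 2 := by simp [sq]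

lemma exists_le_blockSum_sub_blockSum (hoff : ∀ u v, u ≠ v → M u v ^ 2 = 1) {U : Finset V}
    {q b : ℕ} (hU : q * b + q * b * 7 ^ q ≤ #U) :
    ∃ W ⊆ U, #W = q * b ∧ ∃ A ⊆ W, ∃ B ⊆ U \ W, #B = q * b ∧
      (q * b : ℕ) * (q * (√b / 4)) ≤ blockSum M B A - blockSum M B (W \ A) := by
  obtain ⟨W, hWU, hW⟩ := exists_subset_card_eq (show q * b ≤ #U by lia)
  have hsdiff : q * b * 7 ^ q ≤ #(U \ W) := by rw [card_sdiff_of_subset hWU, hW]; lia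
  obtain ⟨A, hA, hfreq⟩ : ∃ A ∈ W.powerset, (7 ^ q : ℝ)⁻¹ * #(U \ W) ≤
      #{v ∈ U \ W | q * (√b / 4) ≤ signedSum (M v) W A} := by
    refine exists_mul_card_le_card_filter _ _ ⟨∅, empty_mem_powerset W⟩ fun v hv => ?_
    have hτ : ∀ u ∈ W, M v u ^ 2 = 1 := fun u hu =>
      hoff v u (by rintro rfl; exact (mem_sdiff.1 hv).2 hu)
    convert pow_le_card_filter_signedSum (M v) q b hW hτ using 1
    rw [card_powerset, hW, div_pow, ← pow_mul, mul_comm b]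
    push_cast
    ring
  have hlarge : q * b ≤ #{v ∈ U \ W | q * (√b / 4) ≤ signedSum (M v) W A} := by
    rw [← Nat.cast_le (α := ℝ)]
    refine le_trans ?_ hfreq
    rw [le_inv_mul_iff₀ (by positivity), mul_comm]
    exact_mod_cast hsdiff
  obtain ⟨B, hB, hBcard⟩ := exists_subset_card_eq hlarge
  refine ⟨W, hWU, hW, A, mem_powerset.1 hA, B, hB.trans (filter_subset _ _), hBcard, ?_⟩
  rw [blockSum, blockSum, ← sum_sub_distrib, ← hBcard, ← nsmul_eq_mul]
  exact card_nsmul_le_sum _ _ _ fun v hv => (mem_filter.1 (hB hv)).2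

/-- A weak form of the **Erdős–Spencer theorem**. -/
lemma exists_le_abs_blockSum (hM : M.IsSymm) (hoff : ∀ u v, u ≠ v → M u v ^ 2 = 1)
    {U : Finset V} {q b : ℕ} (hU : q * b + q * b * 7 ^ q ≤ #U) :
    ∃ S ⊆ U, #S ≤ 2 * (q * b) ∧ (q * b : ℕ) * (q * √b) / 8 ≤ |blockSum M S S| := by
  obtain ⟨W, hWU, hW, A, hA, B, hB, hBcard, hdev⟩ := exists_le_blockSum_sub_blockSum hoff hU
  have hBW : Disjoint B W := disjoint_sdiff_self_left.mono_left hB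
  have hBU : B ⊆ U := hB.trans sdiff_subset
  have hA' : W \ A ⊆ W := sdiff_subset
  have hunion := blockSum_union_self hM (hBW.mono_right hA)
  have hunion' := blockSum_union_self hM (hBW.mono_right hA')
  have hsmall : ∀ C ⊆ W, B ∪ C ⊆ U ∧ #(B ∪ C) ≤ 2 * (q * b) := fun C hC =>
    ⟨union_subset hBU (hC.trans hWU), by
      linarith [card_union_le B C, card_le_card hC]⟩
  have hsmall' : ∀ C ⊆ W, C ⊆ U ∧ #C ≤ 2 * (q * b) := fun C hC =>
    ⟨hC.trans hWU, by linarith [card_le_card hC, Nat.zero_le (q * b)]⟩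
  by_contra! hcon
  have hlt : ∀ {S : Finset V}, S ⊆ U ∧ #S ≤ 2 * (q * b) →
      -((q * b : ℕ) * (q * √b) / 8) < blockSum M S S ∧
        blockSum M S S < (q * b : ℕ) * (q * √b) / 8 := fun hS => abs_lt.1 (hcon _ hS.1 hS.2)
  linarith [(hlt (hsmall A hA)).2, (hlt (hsmall _ hA')).1, (hlt (hsmall' A hA)).1,
    (hlt (hsmall' _ hA')).2]

lemma exists_card_mul_sqrt_card_le_abs_blockSum (hM : M.IsSymm)
    (hoff : ∀ u v, u ≠ v → M u v ^ 2 = 1) {U : Finset V} (hU : 8 ≤ #U) :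
    ∃ S ⊆ U, #U * √(#U) / 512 ≤ |blockSum M S S| := by
  obtain ⟨S, hSU, -, hS⟩ := exists_le_abs_blockSum hM hoff (U := U) (q := 1) (b := #U / 8) (by lia)
  refine ⟨S, hSU, le_trans ?_ hS⟩
  have hfloor : (#U : ℝ) / 16 ≤ (#U / 8 : ℕ) := by
    rw [div_le_iff₀ (by norm_num)]
    exact_mod_cast (by lia : #U ≤ #U / 8 * 16)
  have hsqrt : √(#U) / 4 ≤ √(#U / 8 : ℕ) := by
    apply Real.le_sqrt_of_sq_le
    rw [div_pow, Real.sq_sqrt (Nat.cast_nonneg _)]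
    linarith
  have := mul_le_mul hfloor hsqrt (by positivity) (by positivity)
  rw [one_mul, Nat.cast_one, one_mul]
  linarith

lemma exists_max_blockSum (hM : M.IsSymm) (hdiag : M.diag = 0) (U : Finset V) :
    ∃ X ⊆ U, (∀ S ⊆ U, blockSum M S S ≤ blockSum M X X) ∧ (∀ v ∈ X, 0 ≤ ∑ u ∈ X, M v u) ∧
      ∀ Y ⊆ U \ X, 2 * blockSum M X Y ≤ -blockSum M Y Y := by
  obtain ⟨X, hXU, hX⟩ := exists_max_image U.powerset (fun S => blockSum M S S)
    ⟨∅, empty_mem_powerset U⟩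
  simp only [mem_powerset] at hXU hX
  refine ⟨X, hXU, hX, fun v hv => ?_, fun Y hY => ?_⟩
  · linarith [hX _ ((erase_subset v X).trans hXU), blockSum_self_eq_erase_add hM hdiag hv]
  · linarith [hX _ (union_subset hXU (hY.trans sdiff_subset)),
      blockSum_union_self hM (disjoint_sdiff.mono_right hY)]

/-- Repeatedly removing a maximizer of `S ↦ blockSum M S S` makes the block sums of the union of the
removed sets drop, since each maximizer is negatively correlated with everything outside it. -/
lemma exists_blockSum_le_of_greedy (hM : M.IsSymm) (hdiag : M.diag = 0) {U : Finset V} {k R : ℕ}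
    {d C : ℝ} (hlower : ∀ P ⊆ U, #P ≤ R * k → ∃ S ⊆ U \ P, d ≤ blockSum M S S)
    (hupper : ∀ S ⊆ U, blockSum M S S ≤ C)
    (hcard : ∀ X ⊆ U, (∀ v ∈ X, 0 ≤ ∑ u ∈ X, M v u) → #X ≤ k) {r : ℕ} (hr : r ≤ R) :
    ∃ P ⊆ U, #P ≤ r * k ∧ blockSum M P P ≤ r * C - r * (r - 1) / 2 * d ∧
      ∀ Y ⊆ U \ P, 2 * blockSum M P Y ≤ -(r * blockSum M Y Y) := by
  induction r with
  | zero => exact ⟨∅, by simp [blockSum]⟩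
  | succ r ih =>
    obtain ⟨P, hPU, hPcard, hP, hPY⟩ := ih (by lia)
    obtain ⟨X, hX, hXmax, hXrow, hXY⟩ := exists_max_blockSum hM hdiag (U \ P)
    obtain ⟨S, hS, hdS⟩ := hlower P hPU (hPcard.trans (by gcongr; lia))
    have hXU : X ⊆ U := hX.trans sdiff_subset
    have hPX : Disjoint P X := disjoint_sdiff.mono_right hX
    refine ⟨P ∪ X, union_subset hPU hXU, ?_, ?_, fun Y hY => ?_⟩
    · linarith [card_union_le P X, hcard X hXU hXrow]
    · have hgain : r * d ≤ r * blockSum M X X := by gcongr; exact hdS.trans (hXmax S hS)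
      rw [blockSum_union_self hM hPX]
      push_cast
      linarith [hPY X hX, hupper X hXU]
    · rw [← sup_eq_union, ← sdiff_sdiff_left] at hY
      rw [blockSum_union_left M hPX]
      push_cast
      linarith [hPY Y (hY.trans sdiff_subset), hXY Y hY]

lemma exists_lt_card_forall_sum_nonneg (hM : M.IsSymm) (hdiag : M.diag = 0) {U : Finset V}
    {k : ℕ} {d : ℝ} (hd : 0 < d)
    (hlower : ∀ P ⊆ U, #P ≤ 10 ^ 4 * k → ∃ S ⊆ U \ P, d ≤ blockSum M S S)
    (hupper : ∀ S ⊆ U, |blockSum M S S| ≤ 4096 * d) :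
    ∃ X ⊆ U, k < #X ∧ ∀ v ∈ X, 0 ≤ ∑ u ∈ X, M v u := by
  by_contra! hcon
  obtain ⟨P, hPU, -, hP, -⟩ := exists_blockSum_le_of_greedy hM hdiag hlower
    (fun S hS => (abs_le.1 (hupper S hS)).2)
    (fun X hXU hX => not_lt.1 fun hlt =>
      let ⟨v, hv, hneg⟩ := hcon X hXU hlt
      hneg.not_ge (hX v hv)) le_rfl
  norm_num at hP
  linarith [(abs_le.1 (hupper P hPU)).1]

/-- Deleting a vertex from a maximizer `X ⊆ S` of `|blockSum M X X| - g #X` changes the block sum by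
twice a row sum, so every row sum compensates for the change in the penalty `g`. -/
lemma exists_forall_sub_le_of_penalized (hM : M.IsSymm) (hdiag : M.diag = 0)
    (hle : ∀ u v, |M u v| ≤ 1) {g : ℕ → ℝ} (hg : ∀ n, 0 ≤ g n) {k : ℕ} {S : Finset V}
    (hS : (k : ℝ) ^ 2 ≤ |blockSum M S S| - g #S) :
    ∃ X ⊆ S, k ≤ #X ∧ ((∀ v ∈ X, g #X - g (#X - 1) ≤ 2 * ∑ u ∈ X, M v u) ∨
      ∀ v ∈ X, g #X - g (#X - 1) ≤ 2 * ∑ u ∈ X, (-M) v u) := by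
  obtain ⟨X, hXS, hX⟩ := exists_max_image S.powerset (fun X => |blockSum M X X| - g #X)
    ⟨∅, empty_mem_powerset S⟩
  simp only [mem_powerset] at hXS hX
  refine ⟨X, hXS, ?_, ?_⟩
  · have hsq : (k : ℝ) ^ 2 ≤ (#X : ℝ) ^ 2 := by
      linarith [hX S Subset.rfl, abs_blockSum_self_le hle X, hg #X]
    exact_mod_cast (pow_le_pow_iff_left₀ (by positivity) (by positivity) two_ne_zero).1 hsq
  · have herase : ∀ v ∈ X, |blockSum M X X - 2 * ∑ u ∈ X, M v u| + (g #X - g (#X - 1)) ≤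
        |blockSum M X X| := fun v hv => by
      rw [blockSum_self_eq_erase_add hM hdiag hv, add_sub_cancel_right,
        ← blockSum_self_eq_erase_add hM hdiag hv]
      have := hX _ ((erase_subset v X).trans hXS)
      rw [card_erase_of_mem hv] at this
      linarith
    simp only [Matrix.neg_apply, sum_neg_distrib]
    rcases le_total 0 (blockSum M X X) with h | h
    · refine Or.inl fun v hv => ?_
      have := herase v hv
      rw [abs_of_nonneg h] at this
      linarith [le_abs_self (blockSum M X X - 2 * ∑ u ∈ X, M v u)]
    · refine Or.inr fun v hv => ?_
      have := herase v hv
      rw [abs_of_nonpos h] at this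
      linarith [neg_le_abs (blockSum M X X - 2 * ∑ u ∈ X, M v u)]

end BlockSum

section SignMatrix

variable {V : Type*}

/-- The matrix with entries `1` at edges, `-1` at non-edges and `0` on the diagonal, that is, minus
the Seidel matrix of `G`. -/
noncomputable def signMatrix (G : SimpleGraph V) : Matrix V V ℝ :=
  Matrix.of fun u v => if u = v then 0 else if G.Adj u v then 1 else -1

lemma signMatrix_apply_of_ne (G : SimpleGraph V) {u v : V} (huv : u ≠ v) :
    signMatrix G u v = if G.Adj u v then 1 else -1 :=
  if_neg huv

lemma isSymm_signMatrix (G : SimpleGraph V) : (signMatrix G).IsSymm :=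
  Matrix.IsSymm.ext fun u v => by simp only [signMatrix, Matrix.of_apply, G.adj_comm, eq_comm]

lemma diag_signMatrix (G : SimpleGraph V) : (signMatrix G).diag = 0 :=
  funext fun _ => if_pos rfl

lemma signMatrix_sq_of_ne (G : SimpleGraph V) (u v : V) (huv : u ≠ v) :
    signMatrix G u v ^ 2 = 1 := by
  rw [signMatrix_apply_of_ne G huv]
  split_ifs <;> norm_num

lemma abs_signMatrix_le_one (G : SimpleGraph V) (u v : V) : |signMatrix G u v| ≤ 1 := by
  rw [signMatrix, Matrix.of_apply]
  split_ifs <;> norm_num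

lemma signMatrix_compl (G : SimpleGraph V) : signMatrix Gᶜ = -signMatrix G := by
  ext u v
  by_cases huv : u = v
  · simp [signMatrix, huv]
  · by_cases hadj : G.Adj u v <;> simp [signMatrix, huv, hadj]

lemma sum_signMatrix (G : SimpleGraph V) {S : Finset V} {v : V} (hv : v ∈ S) :
    ∑ u ∈ S, signMatrix G v u = 2 * #{u ∈ S | G.Adj v u} - (#S - 1) := by
  have hentry : ∀ u, signMatrix G v u =
      2 * (if G.Adj v u then 1 else 0) - 1 + if v = u then 1 else 0 := fun u => by
    by_cases huv : v = u
    · simp [signMatrix, huv]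
    · by_cases hadj : G.Adj v u <;> norm_num [signMatrix, huv, hadj]
  simp only [hentry, sum_add_distrib, sum_sub_distrib, ← mul_sum, sum_const, nsmul_eq_mul]
  rw [sum_ite_eq, if_pos hv, sum_boole]
  ring

/-- The minimum degree of the induced subgraph `G[S]` is at least `(|S| - 1) / 2 + a`. -/
def HasDegreeExcess (G : SimpleGraph V) (S : Finset V) (a : ℝ) : Prop :=
  ∀ v ∈ S, ((#S : ℝ) - 1) / 2 + a ≤ #{u ∈ S | G.Adj v u}

lemma HasDegreeExcess.mono {G : SimpleGraph V} {S : Finset V} {a b : ℝ}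
    (h : HasDegreeExcess G S b) (hab : a ≤ b) : HasDegreeExcess G S a := fun v hv =>
  (add_le_add_right hab _).trans (h v hv)

lemma hasDegreeExcess_iff {G : SimpleGraph V} {S : Finset V} {a : ℝ} :
    HasDegreeExcess G S a ↔ ∀ v ∈ S, 2 * a ≤ ∑ u ∈ S, signMatrix G v u := by
  refine forall₂_congr fun v hv => ?_
  rw [sum_signMatrix G hv]
  constructor <;> intro h <;> linarith

lemma exists_hasDegreeExcess_of_penalized (G : SimpleGraph V) {g : ℕ → ℝ} (hg : ∀ n, 0 ≤ g n)
    {k : ℕ} {S : Finset V} (hS : (k : ℝ) ^ 2 ≤ |blockSum (signMatrix G) S S| - g #S) :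
    ∃ X, k ≤ #X ∧ (HasDegreeExcess G X ((g #X - g (#X - 1)) / 4) ∨
      HasDegreeExcess Gᶜ X ((g #X - g (#X - 1)) / 4)) := by
  obtain ⟨X, -, hkX, hX⟩ := exists_forall_sub_le_of_penalized (isSymm_signMatrix G)
    (diag_signMatrix G) (abs_signMatrix_le_one G) hg hS
  simp only [hasDegreeExcess_iff, signMatrix_compl]
  exact ⟨X, hkX, hX.imp (fun h v hv => by linarith [h v hv]) (fun h v hv => by linarith [h v hv])⟩

lemma exists_hasDegreeExcess_zero_of_le_blockSum (G : SimpleGraph V) {k : ℕ} {d : ℝ} (hd : 0 < d)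
    {U : Finset V}
    (hlower : ∀ P ⊆ U, #P ≤ 10 ^ 4 * k → ∃ S ⊆ U \ P, d ≤ blockSum (signMatrix G) S S)
    (hupper : ∀ S, |blockSum (signMatrix G) S S| ≤ 4096 * d) :
    ∃ X, k ≤ #X ∧ HasDegreeExcess G X 0 := by
  obtain ⟨X, -, hkX, hX⟩ := exists_lt_card_forall_sum_nonneg (isSymm_signMatrix G)
    (diag_signMatrix G) hd hlower fun S _ => hupper S
  exact ⟨X, hkX.le, hasDegreeExcess_iff.2 fun v hv => by rw [mul_zero]; exact hX v hv⟩

/-- Either large block sums of one sign persist in every half of the vertex set, or some half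
contains only large block sums of the other sign; the greedy argument applies in both cases. -/
lemma exists_hasDegreeExcess_zero_of_abs_blockSum [Fintype V] (G : SimpleGraph V) {k : ℕ} {d : ℝ}
    (hd : 0 < d) (hk : 4 * (10 ^ 4 * k) ≤ Fintype.card V)
    (hlower : ∀ U : Finset V, Fintype.card V ≤ 4 * #U →
      ∃ S ⊆ U, d ≤ |blockSum (signMatrix G) S S|)
    (hupper : ∀ S, |blockSum (signMatrix G) S S| ≤ 4096 * d) :
    ∃ X, k ≤ #X ∧ (HasDegreeExcess G X 0 ∨ HasDegreeExcess Gᶜ X 0) := by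
  by_cases hpos : ∀ U : Finset V, Fintype.card V ≤ 2 * #U →
      ∃ S ⊆ U, d ≤ blockSum (signMatrix G) S S
  · obtain ⟨X, hkX, hX⟩ := exists_hasDegreeExcess_zero_of_le_blockSum G (k := k) (U := univ) hd
      (fun P _ hP => hpos _ (by rw [card_sdiff_of_subset (subset_univ P), card_univ]; lia)) hupper
    exact ⟨X, hkX, Or.inl hX⟩
  · push Not at hpos
    obtain ⟨U, hU, hlt⟩ := hpos
    have hlower' : ∀ P ⊆ U, #P ≤ 10 ^ 4 * k →
        ∃ S ⊆ U \ P, d ≤ blockSum (signMatrix Gᶜ) S S := fun P hPU hP => by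
      obtain ⟨S, hS, hdS⟩ := hlower (U \ P) (by rw [card_sdiff_of_subset hPU]; lia)
      refine ⟨S, hS, ?_⟩
      rw [signMatrix_compl, blockSum_neg]
      exact (le_abs.1 hdS).resolve_left (hlt S (hS.trans sdiff_subset)).not_ge
    obtain ⟨X, hkX, hX⟩ := exists_hasDegreeExcess_zero_of_le_blockSum Gᶜ hd hlower' fun S => by
      rw [signMatrix_compl, blockSum_neg, abs_neg]
      exact hupper S
    exact ⟨X, hkX, Or.inr hX⟩

lemma exists_hasDegreeExcess_zero [Fintype V] (G : SimpleGraph V) {k : ℕ}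
    (hk : (k : ℝ) ^ 2 ≤ Fintype.card V * √(Fintype.card V))
    (hk' : 4 * (10 ^ 4 * k) ≤ Fintype.card V) :
    ∃ X, k ≤ #X ∧ (HasDegreeExcess G X 0 ∨ HasDegreeExcess Gᶜ X 0) := by
  obtain rfl | hk₀ := k.eq_zero_or_pos
  · exact ⟨∅, by simp [HasDegreeExcess]⟩
  by_cases! hupper : ∃ S, (k : ℝ) ^ 2 < |blockSum (signMatrix G) S S|
  · obtain ⟨S, hS⟩ := hupper
    simpa using exists_hasDegreeExcess_of_penalized G (g := 0) (fun _ => le_rfl)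
      (by simpa using hS.le)
  refine exists_hasDegreeExcess_zero_of_abs_blockSum G (d := (k : ℝ) ^ 2 / 4096) (by positivity) hk'
    (fun U hU => ?_) fun S => (hupper S).trans_eq (by ring)
  obtain ⟨S, hSU, hS⟩ := exists_card_mul_sqrt_card_le_abs_blockSum (isSymm_signMatrix G)
    (signMatrix_sq_of_ne G) (U := U) (by lia)
  refine ⟨S, hSU, le_trans ?_ hS⟩
  have hcard : (Fintype.card V : ℝ) / 4 ≤ #U := by
    rw [div_le_iff₀ (by norm_num), mul_comm]
    exact_mod_cast hU
  have hsqrt : √(Fintype.card V) / 2 ≤ √(#U) := by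
    apply Real.le_sqrt_of_sq_le
    rw [div_pow, Real.sq_sqrt (Nat.cast_nonneg _)]
    linarith
  have := mul_le_mul hcard hsqrt (by positivity) (by positivity)
  linarith

end SignMatrix

section Penalty

/-- The penalty `n ^ {3/2} √(ln n)`; its increments dominate the required excess
`√((n - 1) ln n)`. -/
noncomputable def penalty (n : ℕ) : ℝ := n * √(n * Real.log n)

lemma penalty_nonneg (n : ℕ) : 0 ≤ penalty n := by unfold penalty; positivity

lemma penalty_le {n : ℕ} {x y : ℝ} (hx : n ≤ x) (hy : Real.log n ≤ y) :
    penalty n ≤ x * √(x * y) := by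
  have hx₀ : 0 ≤ x := n.cast_nonneg.trans hx
  unfold penalty
  gcongr

lemma sqrt_le_penalty_sub (n : ℕ) :
    √(((n : ℝ) - 1) * Real.log n) ≤ penalty n - penalty (n - 1) := by
  rcases n with _ | n
  · simp
  have hlog := Real.log_natCast_nonneg (n + 1)
  have hmono : √(n * Real.log n) ≤ √(n * Real.log (n + 1 : ℕ)) := by
    rcases n.eq_zero_or_pos with rfl | hn
    · simp
    · gcongr
      exact n.le_succ
  have hmono' : √(n * Real.log (n + 1 : ℕ)) ≤ √((n + 1 : ℕ) * Real.log (n + 1 : ℕ)) := by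
    gcongr
    exact n.le_succ
  have := mul_le_mul_of_nonneg_left (hmono.trans hmono') n.cast_nonneg
  simp only [penalty, Nat.add_sub_cancel]
  push_cast at *
  rw [add_sub_cancel_right]
  linarith

lemma exists_hasDegreeExcess_of_penalty {V : Type*} (G : SimpleGraph V) {ν : ℝ} (hν : 0 ≤ ν)
    {k : ℕ} {S : Finset V}
    (hS : (k : ℝ) ^ 2 + 4 * ν * penalty #S ≤ |blockSum (signMatrix G) S S|) :
    ∃ X, k ≤ #X ∧ (HasDegreeExcess G X (ν * √(((#X : ℝ) - 1) * Real.log #X)) ∨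
      HasDegreeExcess Gᶜ X (ν * √(((#X : ℝ) - 1) * Real.log #X))) := by
  obtain ⟨X, hkX, hX⟩ := exists_hasDegreeExcess_of_penalized G (g := fun n => 4 * ν * penalty n)
    (fun n => mul_nonneg (by positivity) (penalty_nonneg n)) (le_sub_iff_add_le.2 hS)
  have hle : ν * √(((#X : ℝ) - 1) * Real.log #X) ≤
      (4 * ν * penalty #X - 4 * ν * penalty (#X - 1)) / 4 := by
    linarith [mul_le_mul_of_nonneg_left (sqrt_le_penalty_sub #X) hν]
  exact ⟨X, hkX, hX.imp (·.mono hle) (·.mono hle)⟩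

end Penalty

section Asymptotics

open Filter Asymptotics

lemma exists_nat_mul_between {q : ℕ} {x : ℝ} (hq : q ≠ 0) (hqx : 4 * q ≤ x) :
    ∃ b : ℕ, x ≤ 4 * (q * b : ℕ) ∧ 2 * (q * b : ℕ) ≤ x := by
  have hx : 0 ≤ x := (by positivity : 0 ≤ 4 * (q : ℝ)).trans hqx
  have hfloor := Nat.floor_le (by positivity : 0 ≤ x / (2 * q))
  have hlt := Nat.lt_floor_add_one (x / (2 * q))
  rw [le_div_iff₀ (by positivity)] at hfloor
  rw [div_lt_iff₀ (by positivity)] at hlt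
  refine ⟨⌊x / (2 * q)⌋₊, ?_, ?_⟩ <;> push_cast <;> linarith

lemma rpow_four_thirds_mul_sqrt (k : ℕ) :
    (k : ℝ) ^ (4 / 3 : ℝ) * √((k : ℝ) ^ (4 / 3 : ℝ)) = (k : ℝ) ^ 2 := by
  rw [Real.sqrt_eq_rpow, ← Real.rpow_mul k.cast_nonneg,
    ← Real.rpow_add_of_nonneg k.cast_nonneg (by norm_num) (by norm_num), ← Real.rpow_natCast]
  norm_num

lemma sq_add_penalty_le {k q b s : ℕ} {ν : ℝ} (hν : 0 ≤ ν)
    (hlower : (k : ℝ) ^ (4 / 3 : ℝ) ≤ 4 * (q * b : ℕ)) (hs : s ≤ 2 * (q * b))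
    (hupper : 2 * (q * b : ℕ) ≤ (k : ℝ) ^ (4 / 3 : ℝ))
    (hq : 64 + 128 * (ν * √(Real.log k)) ≤ √q) :
    (k : ℝ) ^ 2 + 4 * ν * penalty s ≤ (q * b : ℕ) * (q * √b) / 8 := by
  set m : ℝ := ((q * b : ℕ) : ℝ) with hm
  have hm₀ : 0 ≤ m := Nat.cast_nonneg _
  have hs' : (s : ℝ) ≤ 2 * m := by rw [hm]; exact_mod_cast hs
  have hlog := Real.log_natCast_nonneg k
  have hsq : (k : ℝ) ^ 2 ≤ 4 * m * (2 * √m) := by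
    rw [← rpow_four_thirds_mul_sqrt]
    gcongr
    rw [Real.sqrt_le_left (by positivity), mul_pow, Real.sq_sqrt hm₀]
    linarith
  have hlog_le : Real.log s ≤ 4 / 3 * Real.log k := by
    rcases s.eq_zero_or_pos with rfl | hs₀
    · simpa using hlog
    have hs₁ : (0 : ℝ) < s := mod_cast hs₀
    have hk : 0 < (k : ℝ) := by
      refine k.cast_nonneg.lt_of_ne' fun hk => ?_
      rw [hk, Real.zero_rpow (by norm_num)] at hupper
      linarith
    rw [← Real.log_rpow hk]
    exact Real.log_le_log hs₁ (hs'.trans hupper)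
  have hpenalty : penalty s ≤ 2 * m * (2 * (√m * √(Real.log k))) := by
    refine (penalty_le hs' hlog_le).trans ?_
    gcongr
    rw [Real.sqrt_le_left (by positivity), mul_pow, mul_pow, Real.sq_sqrt hm₀, Real.sq_sqrt hlog]
    linarith [mul_nonneg hm₀ hlog]
  have hblock : (q : ℝ) * √b = √m * √q := by
    rw [hm, Nat.cast_mul, Real.sqrt_mul q.cast_nonneg]
    linear_combination -√b * Real.mul_self_sqrt (q.cast_nonneg (α := ℝ))
  rw [hblock]
  have := mul_le_mul_of_nonneg_left hq (by positivity : 0 ≤ m * √m)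
  linarith [mul_le_mul_of_nonneg_left hpenalty hν]

/-- `exists_le_abs_blockSum` with `2 q b` just below `k ^ (4 / 3)`, the size at which the
discrepancy can pay for both `k ^ 2` and the penalty. -/
lemma exists_hasDegreeExcess_of_rpow_le {V : Type*} [Fintype V] (G : SimpleGraph V) {k q : ℕ}
    {ν : ℝ} (hν : 0 ≤ ν) (hq₀ : q ≠ 0) (hq : 64 + 128 * (ν * √(Real.log k)) ≤ √q)
    (hqk : 4 * q ≤ (k : ℝ) ^ (4 / 3 : ℝ))
    (hV : (k : ℝ) ^ (4 / 3 : ℝ) * 7 ^ q ≤ Fintype.card V) :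
    ∃ X, k ≤ #X ∧ (HasDegreeExcess G X (ν * √(((#X : ℝ) - 1) * Real.log #X)) ∨
      HasDegreeExcess Gᶜ X (ν * √(((#X : ℝ) - 1) * Real.log #X))) := by
  obtain ⟨b, hlower, hupper⟩ := exists_nat_mul_between hq₀ hqk
  have hcard : q * b + q * b * 7 ^ q ≤ #(univ : Finset V) := by
    rw [card_univ, ← Nat.cast_le (α := ℝ)]
    have hpow : (1 : ℝ) ≤ 7 ^ q := one_le_pow₀ (by norm_num)
    have := mul_le_mul_of_nonneg_right hupper (by positivity : (0 : ℝ) ≤ 7 ^ q)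
    have := mul_le_mul_of_nonneg_left hpow (Nat.cast_nonneg (α := ℝ) (q * b))
    push_cast at *
    linarith
  obtain ⟨S, -, hScard, hS⟩ := exists_le_abs_blockSum (isSymm_signMatrix G)
    (signMatrix_sq_of_ne G) hcard
  exact exists_hasDegreeExcess_of_penalty G hν
    ((sq_add_penalty_le hν hlower hScard hupper hq).trans hS)

lemma seven_pow_le_rpow {k q : ℕ} {y : ℝ} (hk : k ≠ 0) (hq : 2 * q ≤ y * Real.log k) :
    (7 : ℝ) ^ q ≤ (k : ℝ) ^ y := by
  have hseven : (7 : ℝ) ≤ Real.exp 2 := by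
    have := Real.exp_one_gt_d9
    rw [← one_add_one_eq_two, Real.exp_add]
    nlinarith
  calc (7 : ℝ) ^ q ≤ Real.exp 2 ^ q := by gcongr
    _ = Real.exp (2 * q) := by rw [← Real.exp_nat_mul, mul_comm]
    _ ≤ Real.exp (Real.log k * y) := Real.exp_le_exp.2 (by linarith)
    _ = (k : ℝ) ^ y := (Real.rpow_def_of_pos (by positivity) _).symm

lemma eventually_exists_number_of_blocks {ν : ℝ} (hν : 0 < ν) :
    ∀ᶠ k : ℕ in atTop, ∃ q : ℕ, q ≠ 0 ∧ 64 + 128 * (ν * √(Real.log k)) ≤ √q ∧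
      4 * q ≤ (k : ℝ) ^ (4 / 3 : ℝ) ∧ (7 : ℝ) ^ q ≤ (k : ℝ) ^ (10 ^ 5 * ν ^ 2) := by
  have hlog : Tendsto (fun k : ℕ => ν * √(Real.log k)) atTop atTop :=
    (Real.tendsto_sqrt_atTop.comp
      (Real.tendsto_log_atTop.comp tendsto_natCast_atTop_atTop)).const_mul_atTop hν
  have hlittle : (fun k : ℕ => Real.log k) =o[atTop] fun k : ℕ => (k : ℝ) ^ (4 / 3 : ℝ) :=
    (isLittleO_log_rpow_atTop (by norm_num)).comp_tendsto tendsto_natCast_atTop_atTop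
  filter_upwards [hlog.eventually_ge_atTop 1, eventually_ne_atTop 0,
    hlittle.bound (by positivity : 0 < (4 * (5 * 10 ^ 4 * ν ^ 2))⁻¹)] with k hk hk₀ hbound
  set y := ν * √(Real.log k) with hy
  have hysq : y ^ 2 = ν ^ 2 * Real.log k := by
    rw [hy, mul_pow, Real.sq_sqrt (Real.log_natCast_nonneg k)]
  have hone : 1 ≤ y ^ 2 := one_le_pow₀ hk
  have hfloor := Nat.floor_le (by positivity : 0 ≤ 5 * 10 ^ 4 * y ^ 2)
  have hlt := Nat.lt_floor_add_one (5 * 10 ^ 4 * y ^ 2)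
  set q := ⌊5 * 10 ^ 4 * y ^ 2⌋₊
  have hq : (192 * y) ^ 2 ≤ q := by linarith
  refine ⟨q, ?_, ?_, ?_, seven_pow_le_rpow hk₀ (by linarith)⟩
  · rintro h
    rw [h, Nat.cast_zero] at hq
    linarith
  · exact (by linarith : 64 + 128 * y ≤ 192 * y).trans (Real.le_sqrt_of_sq_le hq)
  · rw [Real.norm_of_nonneg (Real.log_natCast_nonneg k),
      Real.norm_of_nonneg (by positivity), le_inv_mul_iff₀ (by positivity)] at hbound
    linarith

lemma eventually_exists_hasDegreeExcess_of_pos {ν : ℝ} (hν : 0 < ν) :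
    ∀ᶠ k : ℕ in atTop, ∀ (V : Type*) [Fintype V],
      (k : ℝ) ^ (10 ^ 5 * ν ^ 2 + 4 / 3) ≤ Fintype.card V → ∀ G : SimpleGraph V,
        ∃ X, k ≤ #X ∧ (HasDegreeExcess G X (ν * √(((#X : ℝ) - 1) * Real.log #X)) ∨
          HasDegreeExcess Gᶜ X (ν * √(((#X : ℝ) - 1) * Real.log #X))) := by
  filter_upwards [eventually_exists_number_of_blocks hν] with k ⟨q, hq₀, hq, hqk, hpow⟩ V _ hV G
  refine exists_hasDegreeExcess_of_rpow_le G hν.le hq₀ hq hqk (le_trans ?_ hV)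
  rw [add_comm, Real.rpow_add_of_nonneg k.cast_nonneg (by norm_num) (by positivity)]
  gcongr

lemma eventually_exists_hasDegreeExcess_zero :
    ∀ᶠ k : ℕ in atTop, ∀ (V : Type*) [Fintype V], (k : ℝ) ^ (4 / 3 : ℝ) ≤ Fintype.card V →
      ∀ G : SimpleGraph V, ∃ X, k ≤ #X ∧ (HasDegreeExcess G X 0 ∨ HasDegreeExcess Gᶜ X 0) := by
  have hroot : Tendsto (fun k : ℕ => (k : ℝ) ^ (1 / 3 : ℝ)) atTop atTop :=
    (tendsto_rpow_atTop (by norm_num)).comp tendsto_natCast_atTop_atTop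
  filter_upwards [hroot.eventually_ge_atTop (4 * 10 ^ 4)] with k hk V _ hV G
  refine exists_hasDegreeExcess_zero G ?_ ?_
  · rw [← rpow_four_thirds_mul_sqrt]
    gcongr
  · have hsplit : (k : ℝ) ^ (4 / 3 : ℝ) = (k : ℝ) * (k : ℝ) ^ (1 / 3 : ℝ) := by
      rw [← Real.rpow_one_add' k.cast_nonneg (by norm_num)]
      norm_num
    have := mul_le_mul_of_nonneg_left hk (k.cast_nonneg (α := ℝ))
    rw [← Nat.cast_le (α := ℝ)]
    push_cast
    linarith

end Asymptotics

end QuasiRamsey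

theorem quasi_ramsey_upper_discrepancy_general (ν a : ℝ) (ha : 10 ^ 5 ≤ a) :
    ∀ᶠ k : ℕ in Filter.atTop, ∀ (V : Type*) [Fintype V],
      (k : ℝ) ^ (a * ν ^ 2 + 4 / 3) ≤ (Fintype.card V : ℝ) →
      ∀ G : SimpleGraph V, ∃ S : Finset V, k ≤ S.card ∧
        (QuasiRamsey.HasDegreeExcess G S (ν * √(((S.card : ℝ) - 1) * Real.log S.card)) ∨
          QuasiRamsey.HasDegreeExcess Gᶜ S (ν * √(((S.card : ℝ) - 1) * Real.log S.card))) := by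
  have hmono : ∀ {k : ℕ} {y : ℝ}, 1 ≤ k → y ≤ a * ν ^ 2 + 4 / 3 →
      (k : ℝ) ^ y ≤ (k : ℝ) ^ (a * ν ^ 2 + 4 / 3) := fun hk hy =>
    Real.rpow_le_rpow_of_exponent_le (mod_cast hk) hy
  rcases le_or_gt ν 0 with hν | hν
  · filter_upwards [QuasiRamsey.eventually_exists_hasDegreeExcess_zero,
      Filter.eventually_ge_atTop 1] with k hk hk₁ V _ hV G
    have hν' : ∀ x, ν * √x ≤ 0 := fun x => mul_nonpos_of_nonpos_of_nonneg hν x.sqrt_nonneg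
    obtain ⟨S, hkS, hS⟩ := hk V ((hmono hk₁ (by nlinarith [sq_nonneg ν])).trans hV) G
    exact ⟨S, hkS, hS.imp (·.mono (hν' _)) (·.mono (hν' _))⟩
  · filter_upwards [QuasiRamsey.eventually_exists_hasDegreeExcess_of_pos hν,
      Filter.eventually_ge_atTop 1] with k hk hk₁ V _ hV G
    exact hk V ((hmono hk₁ (by gcongr)).trans hV) G

theorem quasi_ramsey_upper_discrepancy (ν c : ℝ) (hν : 0 ≤ ν) (hc : 4 / 3 < c) :
    ∀ᶠ k : ℕ in Filter.atTop, ∀ N : ℕ,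
      (k : ℝ) ^ (c * 10 ^ 6 * ν ^ 2 + 4 / 3) ≤ (N : ℝ) →
      ∀ G : SimpleGraph (Fin N), ∃ S : Finset (Fin N), k ≤ S.card ∧
        ((∀ v ∈ S,
            ((S.card : ℝ) - 1) / 2 +
                ν * Real.sqrt (((S.card : ℝ) - 1) * Real.log (S.card : ℝ)) ≤
              ((S.filter (G.Adj v)).card : ℝ)) ∨
         (∀ v ∈ S,
            ((S.card : ℝ) - 1) / 2 +
                ν * Real.sqrt (((S.card : ℝ) - 1) * Real.log (S.card : ℝ)) ≤
              ((S.filter (Gᶜ.Adj v)).card : ℝ))) := by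
  filter_upwards [quasi_ramsey_upper_discrepancy_general ν (c * 10 ^ 6) (by linarith)]
    with k hk N hN G
  obtain ⟨S, hkS, hS⟩ := hk (Fin N) (by simpa using hN) G
  exact ⟨S, hkS, hS.imp id fun h v hv => by convert h v hv⟩
end

section
/- There exists a constant C > 0 such that for all sufficiently large k, every graph G on at least C·k·ln k vertices satisfies: G or its complement contains an induced subgraph H on exactly k vertices with minimum degree at least (1/2)(k−1) − 2·√((k−1)·ln k). -/
open scoped Classical

/-!
Assign weight `1` to the edges and `-1` to the non-edges, and repeatedly remove a vertex set whose
total weight, its *discrepancy*, is largest in absolute value. If two of the removed sets have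
discrepancies of the same sign, then the cross weight between them has the opposite sign, and it is
at least half as large as the later discrepancy, since otherwise their union would beat the earlier
set. For four removed sets of the same sign these cross weights add up to so much that the
discrepancy of the fourth set must be at most `2 / 3` of that of the first. Among any seven
consecutive sets four have the same sign, so the discrepancies decay geometrically. If all removed
sets had fewer than `k` vertices, the first discrepancy would be less than `k ^ 2`, so it would drop
below `1` within `O(log k)` steps; but by then two vertices are still left, and they have
discrepancy `2` or `-2`. Hence one of the removed sets `W` has at least `k` vertices, and extremality
of `W` against the sets `W \ {v}` yields minimum degree at least `(#W - 1) / 2` in the graph or in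
its complement.

A random `k`-subset of `W` keeps the degree ratio up to the stated error: the number of
non-neighbours of a vertex in the subset is hypergeometric, its exponential moments are dominated
by those of a binomial variable, and Hoeffding's lemma bounds the latter.
-/

open Finset

section Counting

variable {α β : Type*}

theorem exists_orderEmbedding_forall_eq [LinearOrder α] [Fintype β] {n : ℕ}
    (s : Finset α) (f : α → β) (h : Fintype.card β * n < #s) :
    ∃ (g : Fin (n + 1) ↪o α) (b : β), ∀ i, g i ∈ s ∧ f (g i) = b := by
  obtain ⟨b, -, hb⟩ :=
    exists_lt_card_fiber_of_mul_lt_card_of_maps_to (t := univ) (fun _ _ ↦ mem_univ _) h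
  exact ⟨orderEmbOfCardLe _ hb, b, fun i ↦ mem_filter.1 (orderEmbOfCardLe_mem _ hb i)⟩

theorem cast_descFactorial_le_pow_mul {p : ℝ} (hp : p ∈ Set.Icc 0 1) {a b : ℕ}
    (hab : (a : ℝ) ≤ p * b) (j : ℕ) :
    (a.descFactorial j : ℝ) ≤ p ^ j * b.descFactorial j := by
  obtain ⟨hp₀, hp₁⟩ := hp
  have hab' : a ≤ b := by exact_mod_cast hab.trans (mul_le_of_le_one_left b.cast_nonneg hp₁)
  induction j with
  | zero => simp
  | succ j ih =>
    have sub_le : ((a - j : ℕ) : ℝ) ≤ p * (b - j : ℕ) := by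
      rcases le_total a j with h | h
      · rw [Nat.sub_eq_zero_of_le h, Nat.cast_zero]
        positivity
      · rw [Nat.cast_sub h, Nat.cast_sub (h.trans hab')]
        nlinarith [mul_le_of_le_one_left j.cast_nonneg hp₁]
    calc ((a.descFactorial (j + 1) : ℕ) : ℝ)
        = (a - j : ℕ) * a.descFactorial j := by rw [Nat.descFactorial_succ, Nat.cast_mul]
      _ ≤ p * (b - j : ℕ) * (p ^ j * b.descFactorial j) := by gcongr
      _ = p ^ (j + 1) * b.descFactorial (j + 1) := by
        rw [Nat.descFactorial_succ, Nat.cast_mul]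
        ring

theorem cast_choose_le_pow_mul {p : ℝ} (hp : p ∈ Set.Icc 0 1) {a b : ℕ}
    (hab : (a : ℝ) ≤ p * b) (j : ℕ) : (a.choose j : ℝ) ≤ p ^ j * b.choose j := by
  have h := cast_descFactorial_le_pow_mul hp hab j
  rw [Nat.descFactorial_eq_factorial_mul_choose, Nat.descFactorial_eq_factorial_mul_choose,
    Nat.cast_mul, Nat.cast_mul, mul_left_comm] at h
  exact le_of_mul_le_mul_left h (by positivity)

variable [DecidableEq α]

theorem sum_powersetCard_card_inter_choose {U A : Finset α} (hA : A ⊆ U) {n j : ℕ} (hj : j ≤ n) :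
    ∑ S ∈ U.powersetCard n, (#(S ∩ A)).choose j =
      (#A).choose j * (#U - j).choose (n - j) := by
  calc ∑ S ∈ U.powersetCard n, (#(S ∩ A)).choose j
      = ∑ S ∈ U.powersetCard n, #{T ∈ A.powersetCard j | T ⊆ S} := by
        refine sum_congr rfl fun S _ ↦ ?_
        rw [← card_powersetCard]
        congr 1
        ext T
        simp only [mem_powersetCard, mem_filter, subset_inter_iff]
        tauto
    _ = ∑ T ∈ A.powersetCard j, #{S ∈ U.powersetCard n | T ⊆ S} :=
        sum_card_bipartiteAbove_eq_sum_card_bipartiteBelow fun S T : Finset α ↦ T ⊆ S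
    _ = ∑ _T ∈ A.powersetCard j, (#U - j).choose (n - j) := by
        refine sum_congr rfl fun T hT ↦ ?_
        obtain ⟨hTA, rfl⟩ := mem_powersetCard.1 hT
        exact card_filter_powersetCard_subset T U n (hTA.trans hA) hj
    _ = (#A).choose j * (#U - j).choose (n - j) := by
        rw [sum_const, card_powersetCard, smul_eq_mul]

theorem sum_powersetCard_card_inter_choose_le {p : ℝ} (hp : p ∈ Set.Icc 0 1) {U A : Finset α}
    (hA : A ⊆ U) (hAU : (#A : ℝ) ≤ p * #U) {n j : ℕ} (hj : j ≤ n) :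
    (∑ S ∈ U.powersetCard n, (#(S ∩ A)).choose j : ℝ) ≤
      (#U).choose n * (p ^ j * n.choose j) := by
  calc (∑ S ∈ U.powersetCard n, (#(S ∩ A)).choose j : ℝ)
      = (#A).choose j * (#U - j).choose (n - j) := by
        exact_mod_cast sum_powersetCard_card_inter_choose hA hj
    _ ≤ p ^ j * (#U).choose j * (#U - j).choose (n - j) := by
        gcongr
        exact cast_choose_le_pow_mul hp hAU j
    _ = p ^ j * ((#U).choose n * n.choose j : ℕ) := by
        rw [Nat.choose_mul hj, Nat.cast_mul, mul_assoc]
    _ = (#U).choose n * (p ^ j * n.choose j) := by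
        push_cast
        ring

theorem sum_powersetCard_one_add_pow_card_inter_le {p : ℝ} (hp : p ∈ Set.Icc 0 1)
    {U A : Finset α} (hA : A ⊆ U) (hAU : (#A : ℝ) ≤ p * #U) (n : ℕ) {y : ℝ} (hy : 0 ≤ y) :
    ∑ S ∈ U.powersetCard n, (1 + y) ^ #(S ∩ A) ≤ (#U).choose n * (1 + p * y) ^ n := by
  have expand {S} (hS : S ∈ U.powersetCard n) :
      (1 + y) ^ #(S ∩ A) = ∑ j ∈ range (n + 1), y ^ j * (#(S ∩ A)).choose j := by
    have hSn : #(S ∩ A) ≤ n := (mem_powersetCard.1 hS).2 ▸ card_le_card inter_subset_left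
    simp only [add_comm 1 y, add_pow, one_pow, mul_one]
    refine sum_subset (range_subset_range.2 (by gcongr)) fun j _ hj ↦ ?_
    rw [Nat.choose_eq_zero_of_lt (by simpa using hj), Nat.cast_zero, mul_zero]
  calc ∑ S ∈ U.powersetCard n, (1 + y) ^ #(S ∩ A)
      = ∑ j ∈ range (n + 1), y ^ j * ∑ S ∈ U.powersetCard n, ((#(S ∩ A)).choose j : ℝ) := by
        rw [sum_congr rfl fun S ↦ expand, sum_comm]
        simp only [mul_sum]
    _ ≤ ∑ j ∈ range (n + 1), y ^ j * ((#U).choose n * (p ^ j * n.choose j)) := by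
        gcongr with j hj
        exact sum_powersetCard_card_inter_choose_le hp hA hAU (mem_range_succ_iff.1 hj)
    _ = (#U).choose n * (1 + p * y) ^ n := by
        rw [add_comm 1, add_pow, mul_sum]
        refine sum_congr rfl fun j _ ↦ ?_
        ring

theorem sum_powersetCard_succ_sum_erase {M : Type*} [AddCommMonoid M] (W : Finset α) (n : ℕ)
    (f : α → Finset α → M) :
    ∑ S ∈ W.powersetCard (n + 1), ∑ v ∈ S, f v (S.erase v) =
      ∑ v ∈ W, ∑ S ∈ (W.erase v).powersetCard n, f v S := by
  rw [sum_sigma', sum_sigma']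
  refine sum_bij' (fun q _ ↦ ⟨q.2, q.1.erase q.2⟩) (fun q _ ↦ ⟨insert q.1 q.2, q.1⟩)
    ?_ ?_ ?_ ?_ fun _ _ ↦ rfl
  all_goals
    rintro ⟨_, _⟩
    simp only [mem_sigma, mem_powersetCard]
    grind [insert_erase, erase_insert]

end Counting

open Real ProbabilityTheory in
theorem one_add_mul_exp_sub_one_le_s17 {p : ℝ} (hp : p ∈ Set.Icc 0 1) (s : ℝ) :
    1 + p * (exp s - 1) ≤ exp (p * s + s ^ 2 / 8) := by
  let μ := bernoulliMeasure (1 : ℝ) 0 ⟨p, hp⟩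
  have mem_Icc : ∀ᵐ x ∂μ, id x ∈ Set.Icc (0 : ℝ) 1 := by
    simp [μ, MeasureTheory.ae_iff, bernoulliMeasure_def]
  have hoeffding : p * exp (s * (1 - p)) + (1 - p) * exp (-(s * p)) ≤ exp (s ^ 2 / 8) := by
    convert (hasSubgaussianMGF_of_mem_Icc aemeasurable_id mem_Icc).mgf_le s using 1
    · simp [mgf, μ, integral_bernoulliMeasure]
    · norm_num
      ring
  calc 1 + p * (exp s - 1)
      = exp (p * s) * (p * exp (s * (1 - p)) + (1 - p) * exp (-(s * p))) := by
        rw [mul_add, mul_left_comm, mul_left_comm _ (1 - p), ← exp_add, ← exp_add]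
        rw [show p * s + s * (1 - p) = s by ring, show p * s + -(s * p) = 0 by ring, exp_zero]
        ring
    _ ≤ exp (p * s) * exp (s ^ 2 / 8) := by gcongr
    _ = exp (p * s + s ^ 2 / 8) := (exp_add _ _).symm

section Thinning

theorem exists_subset_forall_one_add_pow_card_inter_le {α : Type*} [DecidableEq α] {p : ℝ}
    (hp : p ∈ Set.Icc 0 1) {W : Finset α} {A : α → Finset α} (hA : ∀ v ∈ W, A v ⊆ W.erase v)
    (hAW : ∀ v ∈ W, (#(A v) : ℝ) ≤ p * #(W.erase v)) {n : ℕ} (hn : n + 1 ≤ #W) {y : ℝ}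
    (hy : 0 ≤ y) :
    ∃ S ⊆ W, #S = n + 1 ∧
      ∀ v ∈ S, (1 + y) ^ #(S.erase v ∩ A v) ≤ (n + 1) * (1 + p * y) ^ n := by
  have choose_eq : (#W : ℝ) * (#W - 1).choose n = (#W).choose (n + 1) * (n + 1) := by
    have h := Nat.add_one_mul_choose_eq (#W - 1) n
    rw [Nat.sub_add_cancel (by omega)] at h
    exact_mod_cast h
  have average : ∑ S ∈ W.powersetCard (n + 1), ∑ v ∈ S, (1 + y) ^ #(S.erase v ∩ A v) ≤
      ∑ S ∈ W.powersetCard (n + 1), (n + 1) * (1 + p * y) ^ n := by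
    calc ∑ S ∈ W.powersetCard (n + 1), ∑ v ∈ S, (1 + y) ^ #(S.erase v ∩ A v)
        = ∑ v ∈ W, ∑ S ∈ (W.erase v).powersetCard n, (1 + y) ^ #(S ∩ A v) :=
          sum_powersetCard_succ_sum_erase W n fun v S ↦ (1 + y) ^ #(S ∩ A v)
      _ ≤ ∑ v ∈ W, ((#W - 1).choose n : ℝ) * (1 + p * y) ^ n := by
          refine sum_le_sum fun v hv ↦ ?_
          rw [← card_erase_of_mem hv]
          exact sum_powersetCard_one_add_pow_card_inter_le hp (hA v hv) (hAW v hv) n hy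
      _ = ∑ S ∈ W.powersetCard (n + 1), (n + 1) * (1 + p * y) ^ n := by
          rw [sum_const, sum_const, card_powersetCard, nsmul_eq_mul, nsmul_eq_mul, ← mul_assoc,
            ← mul_assoc, choose_eq]
  obtain ⟨S, hS, hSle⟩ := exists_le_of_sum_le (powersetCard_nonempty.2 hn) average
  obtain ⟨hSW, hSn⟩ := mem_powersetCard.1 hS
  refine ⟨S, hSW, hSn, fun v hv ↦ le_trans ?_ hSle⟩
  exact single_le_sum (f := fun v ↦ (1 + y) ^ #(S.erase v ∩ A v)) (fun _ _ ↦ by positivity) hv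

open Real in
theorem le_add_mul_of_exp_pow_le {p ε : ℝ} (hp : p ∈ Set.Icc 0 1) (hε : 0 < ε) {m n : ℕ}
    (hn : (n + 1 : ℝ) ≤ exp (2 * ε ^ 2 * n))
    (h : exp (4 * ε) ^ m ≤ (n + 1) * (1 + p * (exp (4 * ε) - 1)) ^ n) :
    (m : ℝ) ≤ (p + ε) * n := by
  have base_nonneg : 0 ≤ 1 + p * (exp (4 * ε) - 1) := by
    have := one_le_exp (x := 4 * ε) (by positivity)
    nlinarith [hp.1]
  have exp_le : exp (m * (4 * ε)) ≤
      exp (2 * ε ^ 2 * n + n * (p * (4 * ε) + (4 * ε) ^ 2 / 8)) := by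
    rw [exp_nat_mul, exp_add, exp_nat_mul]
    refine h.trans ?_
    gcongr
    exact one_add_mul_exp_sub_one_le_s17 hp (4 * ε)
  rw [exp_le_exp] at exp_le
  exact le_of_mul_le_mul_left (by linarith) (show 0 < 4 * ε by positivity)

open Real in
theorem exists_subset_forall_card_inter_le {α : Type*} [DecidableEq α] {p ε : ℝ}
    (hp : p ∈ Set.Icc 0 1) (hε : 0 < ε) {W : Finset α} {A : α → Finset α}
    (hA : ∀ v ∈ W, A v ⊆ W.erase v) (hAW : ∀ v ∈ W, (#(A v) : ℝ) ≤ p * #(W.erase v)) {n : ℕ}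
    (hn : n + 1 ≤ #W) (hnε : (n + 1 : ℝ) ≤ exp (2 * ε ^ 2 * n)) :
    ∃ S ⊆ W, #S = n + 1 ∧ ∀ v ∈ S, (#(S.erase v ∩ A v) : ℝ) ≤ (p + ε) * n := by
  -- `4 * ε` minimises `s ^ 2 / 8 - ε * s`, the exponent that Hoeffding's lemma leaves.
  obtain ⟨S, hSW, hSn, hS⟩ := exists_subset_forall_one_add_pow_card_inter_le hp hA hAW hn
    (y := exp (4 * ε) - 1) (sub_nonneg.2 (one_le_exp (by positivity)))
  simp only [add_sub_cancel] at hS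
  exact ⟨S, hSW, hSn, fun v hv ↦ le_add_mul_of_exp_pow_le hp hε hnε (hS v hv)⟩

variable {V : Type*} (G : SimpleGraph V) [DecidableRel G.Adj]

theorem card_filter_adj_add_card_filter_compl_adj [DecidableEq V] (S : Finset V) (v : V) :
    #{u ∈ S | G.Adj v u} + #{u ∈ S | Gᶜ.Adj v u} = #(S.erase v) := by
  rw [← card_filter_add_card_filter_not (s := S.erase v) (G.Adj v)]
  congr 2 <;> ext u <;> simp only [mem_filter, mem_erase, SimpleGraph.compl_adj] <;>
    grind [SimpleGraph.irrefl]

open Real in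
theorem exists_subset_forall_le_card_filter_adj {c ε : ℝ} (hc : c ∈ Set.Icc 0 1) (hε : 0 < ε)
    {W : Finset V} (hW : ∀ v ∈ W, c * (#W - 1) ≤ #{u ∈ W | G.Adj v u}) {n : ℕ}
    (hn : n + 1 ≤ #W) (hnε : (n + 1 : ℝ) ≤ exp (2 * ε ^ 2 * n)) :
    ∃ S ⊆ W, #S = n + 1 ∧ ∀ v ∈ S, (c - ε) * n ≤ #{u ∈ S | G.Adj v u} := by
  have degree_add (S : Finset V) {v : V} (hv : v ∈ S) :
      (#{u ∈ S | G.Adj v u} : ℝ) + #{u ∈ S | Gᶜ.Adj v u} = #S - 1 := by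
    rw [← cast_card_erase_of_mem hv]
    exact_mod_cast card_filter_adj_add_card_filter_compl_adj G S v
  obtain ⟨S, hSW, hSn, hS⟩ := exists_subset_forall_card_inter_le (p := 1 - c)
    ⟨by linarith [hc.2], by linarith [hc.1]⟩ hε (A := fun v ↦ {u ∈ W | Gᶜ.Adj v u})
    (fun v _ u hu ↦ mem_erase.2 ⟨(mem_filter.1 hu).2.ne', (mem_filter.1 hu).1⟩)
    (fun v hv ↦ by rw [cast_card_erase_of_mem hv]; linarith [degree_add W hv, hW v hv]) hn hnε
  refine ⟨S, hSW, hSn, fun v hv ↦ ?_⟩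
  have compl_degree_le : (#{u ∈ S | Gᶜ.Adj v u} : ℝ) ≤ (1 - c + ε) * n := by
    refine le_trans ?_ (hS v hv)
    gcongr
    grind [SimpleGraph.irrefl]
  have degree_add_S := degree_add S hv
  rw [hSn, Nat.cast_add_one] at degree_add_S
  linarith

open Real in
theorem exists_subset_forall_sub_sqrt_le_card_filter_adj {c : ℝ} (hc : c ∈ Set.Icc 0 1)
    {W : Finset V} (hW : ∀ v ∈ W, c * (#W - 1) ≤ #{u ∈ W | G.Adj v u}) {k : ℕ} (hk : 2 ≤ k)
    (hkW : k ≤ #W) :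
    ∃ S ⊆ W, #S = k ∧ ∀ v ∈ S, c * (k - 1) - √((k - 1) * log k / 2) ≤ #{u ∈ S | G.Adj v u} := by
  obtain ⟨n, rfl⟩ := Nat.exists_eq_add_of_le' (one_le_two.trans hk)
  have n_pos : (0 : ℝ) < n := by exact_mod_cast Nat.le_of_succ_le_succ hk
  have log_pos : 0 < log (n + 1) := Real.log_pos (by linarith)
  let ε := √(log (n + 1) / (2 * n))
  have exp_eq : exp (2 * ε ^ 2 * n) = n + 1 := by
    rw [sq_sqrt (by positivity), show 2 * (log (n + 1) / (2 * n)) * n = log (n + 1) by field_simp,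
      exp_log (by positivity)]
  have mul_eq : ε * n = √(n * log (n + 1) / 2) := by
    rw [← sqrt_sq n_pos.le, ← sqrt_mul (by positivity), sqrt_sq n_pos.le]
    congr 1
    field_simp
  obtain ⟨S, hSW, hSn, hS⟩ := exists_subset_forall_le_card_filter_adj G hc
    (sqrt_pos.2 (by positivity) : 0 < ε) hW hkW exp_eq.ge
  refine ⟨S, hSW, hSn, fun v hv ↦ ?_⟩
  rw [Nat.cast_add_one, add_sub_cancel_right, ← mul_eq, ← sub_mul]
  exact hS v hv

end Thinning

section Discrepancy

variable {V R : Type*} [CommRing R]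

/-- The total weight `∑ w x y` over the pairs `(x, y)` of `X × Y`. -/
def pairWeight (w : V → V → R) (X Y : Finset V) : R :=
  ∑ x ∈ X, ∑ y ∈ Y, w x y

/-- The discrepancy of a set of vertices: its total weight over ordered pairs, so that for
the weight `edgeSign G` it is twice the number of edges minus twice the number of non-edges. -/
def discrepancy (w : V → V → R) (X : Finset V) : R :=
  pairWeight w X X

theorem discrepancy_neg (w : V → V → R) (X : Finset V) :
    discrepancy (-w) X = -discrepancy w X := by
  simp only [discrepancy, pairWeight, Pi.neg_apply, sum_neg_distrib]

section Union

variable {w : V → V → R}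

theorem pairWeight_comm (hw : ∀ x y, w x y = w y x) (X Y : Finset V) :
    pairWeight w X Y = pairWeight w Y X :=
  sum_comm.trans (sum_congr rfl fun y _ ↦ sum_congr rfl fun x _ ↦ hw x y)

variable [DecidableEq V]

theorem pairWeight_union_left {X Y : Finset V} (h : Disjoint X Y) (Z : Finset V) :
    pairWeight w (X ∪ Y) Z = pairWeight w X Z + pairWeight w Y Z :=
  sum_union h

theorem discrepancy_union (hw : ∀ x y, w x y = w y x) {X Y : Finset V} (h : Disjoint X Y) :
    discrepancy w (X ∪ Y) = discrepancy w X + discrepancy w Y + 2 * pairWeight w X Y := by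
  rw [discrepancy, pairWeight_union_left h, pairWeight_comm hw X, pairWeight_comm hw Y,
    pairWeight_union_left h, pairWeight_union_left h, pairWeight_comm hw Y X, discrepancy,
    discrepancy]
  ring

end Union

variable [LinearOrder R] {w : V → V → R}

/-- `X` is a subset of `U` of largest absolute discrepancy. -/
structure IsExtremal (w : V → V → R) (U X : Finset V) : Prop where
  subset : X ⊆ U
  abs_discrepancy_le : ∀ ⦃Y⦄, Y ⊆ U → |discrepancy w Y| ≤ |discrepancy w X|

theorem exists_isExtremal (w : V → V → R) (U : Finset V) : ∃ X, IsExtremal w U X := by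
  obtain ⟨X, hX, hmax⟩ := exists_max_image U.powerset (fun Y ↦ |discrepancy w Y|)
    (powerset_nonempty U)
  exact ⟨X, mem_powerset.1 hX, fun Y hY ↦ hmax Y (mem_powerset.2 hY)⟩

namespace IsExtremal

variable {U X Y : Finset V}

theorem neg (h : IsExtremal w U X) : IsExtremal (-w) U X :=
  ⟨h.subset, by simpa only [discrepancy_neg, abs_neg] using h.abs_discrepancy_le⟩

theorem self (h : IsExtremal w U X) : IsExtremal w X X :=
  ⟨Subset.rfl, fun _ hY ↦ h.abs_discrepancy_le (hY.trans h.subset)⟩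

variable [IsStrictOrderedRing R]

theorem discrepancy_le (h : IsExtremal w U X) (hX : 0 ≤ discrepancy w X) (hY : Y ⊆ U) :
    discrepancy w Y ≤ discrepancy w X :=
  (le_abs_self _).trans ((h.abs_discrepancy_le hY).trans_eq (abs_of_nonneg hX))

theorem neg_discrepancy_le (h : IsExtremal w U X) (hX : 0 ≤ discrepancy w X) (hY : Y ⊆ U) :
    -discrepancy w X ≤ discrepancy w Y :=
  neg_le_of_abs_le ((h.abs_discrepancy_le hY).trans_eq (abs_of_nonneg hX))

theorem two_mul_pairWeight_le (h : IsExtremal w U X)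
    (hw : ∀ x y, w x y = w y x) (hX : 0 ≤ discrepancy w X) (hY : Y ⊆ U) (hXY : Disjoint X Y) :
    2 * pairWeight w X Y ≤ -discrepancy w Y := by
  have union_le := h.discrepancy_le hX (union_subset h.subset hY)
  rw [discrepancy_union hw hXY] at union_le
  linarith

theorem sum_weight_nonneg (h : IsExtremal w U U) (hw : ∀ x y, w x y = w y x)
    (hU : 0 ≤ discrepancy w U) {v : V} (hv : v ∈ U) (hvv : w v v = 0) :
    0 ≤ ∑ u ∈ U, w v u := by
  have expand := discrepancy_union hw (disjoint_singleton_left.2 (notMem_erase v U))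
  have discrepancy_singleton : discrepancy w {v} = 0 := by
    simp only [discrepancy, pairWeight, sum_singleton, hvv]
  rw [← insert_eq, insert_erase hv, discrepancy_singleton, pairWeight, sum_singleton,
    sum_erase U hvv] at expand
  linarith [h.discrepancy_le hU (erase_subset v U)]

end IsExtremal

variable [DecidableEq V]

/-- The sequence obtained by removing an extremal set `X i` from the current vertex set `U i`
over and over; once `U i` is exhausted, all further sets are empty. -/
structure IsPeeling (w : V → V → R) (U X : ℕ → Finset V) : Prop where
  isExtremal : ∀ i, IsExtremal w (U i) (X i)
  sdiff_eq : ∀ i, U i \ X i = U (i + 1)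

theorem exists_isPeeling (w : V → V → R) (U₀ : Finset V) :
    ∃ U X : ℕ → Finset V, U 0 = U₀ ∧ IsPeeling w U X := by
  choose X hX using exists_isExtremal w
  let U (i : ℕ) : Finset V := (fun T ↦ T \ X T)^[i] U₀
  exact ⟨U, fun i ↦ X (U i), rfl, fun i ↦ hX (U i),
    fun i ↦ (Function.iterate_succ_apply' (fun T ↦ T \ X T) i U₀).symm⟩

namespace IsPeeling

variable {U X : ℕ → Finset V}

theorem neg (h : IsPeeling w U X) : IsPeeling (-w) U X :=
  ⟨fun i ↦ (h.isExtremal i).neg, h.sdiff_eq⟩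

theorem antitone (h : IsPeeling w U X) : Antitone U :=
  antitone_nat_of_succ_le fun i ↦ h.sdiff_eq i ▸ sdiff_subset

theorem subset {i j : ℕ} (h : IsPeeling w U X) (hij : i ≤ j) : X j ⊆ U i :=
  (h.isExtremal j).subset.trans (h.antitone hij)

theorem disjoint {i j : ℕ} (h : IsPeeling w U X) (hij : i < j) : Disjoint (X i) (X j) :=
  disjoint_sdiff.mono_right (h.sdiff_eq i ▸ h.subset hij)

theorem abs_discrepancy_antitone (h : IsPeeling w U X) : Antitone fun i ↦ |discrepancy w (X i)| :=
  fun i _ hij ↦ (h.isExtremal i).abs_discrepancy_le (h.subset hij)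

theorem card_le_card_add {k : ℕ} (h : IsPeeling w U X) (hX : ∀ i, #(X i) ≤ k) (i : ℕ) :
    #(U 0) ≤ #(U i) + i * k := by
  induction i with
  | zero => simp only [zero_mul, add_zero, le_refl]
  | succ i ih =>
    have card_sub_le := le_card_sdiff (X i) (U i)
    rw [h.sdiff_eq] at card_sub_le
    linarith [hX i, Nat.sub_le_iff_le_add.1 card_sub_le]

variable [IsStrictOrderedRing R]

theorem two_mul_pairWeight_le {i j : ℕ} (h : IsPeeling w U X) (hw : ∀ x y, w x y = w y x)
    (hij : i < j) (hi : 0 ≤ discrepancy w (X i)) :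
    2 * pairWeight w (X i) (X j) ≤ -discrepancy w (X j) :=
  (h.isExtremal i).two_mul_pairWeight_le hw hi (h.subset hij.le) (h.disjoint hij)

theorem three_mul_discrepancy_le {i j l m : ℕ} (h : IsPeeling w U X)
    (hw : ∀ x y, w x y = w y x) (hij : i < j) (hjl : j < l) (hlm : l < m)
    (hi : 0 ≤ discrepancy w (X i)) (hj : 0 ≤ discrepancy w (X j))
    (hl : 0 ≤ discrepancy w (X l)) :
    3 * discrepancy w (X m) ≤ 2 * discrepancy w (X i) := by
  have hil := hij.trans hjl
  have hjm := hjl.trans hlm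
  have hlm_disj : Disjoint (X l) (X m) := h.disjoint hlm
  have hj_disj : Disjoint (X j) (X l ∪ X m) :=
    disjoint_union_right.2 ⟨h.disjoint hjl, h.disjoint hjm⟩
  have hi_disj : Disjoint (X i) (X j ∪ (X l ∪ X m)) :=
    disjoint_union_right.2 ⟨h.disjoint hij,
      disjoint_union_right.2 ⟨h.disjoint hil, h.disjoint (hij.trans hjm)⟩⟩
  have pairWeight_union_right {Y Z : Finset V} (T : Finset V) (hYZ : Disjoint Y Z) :
      pairWeight w T (Y ∪ Z) = pairWeight w T Y + pairWeight w T Z := by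
    simp only [pairWeight_comm hw T, pairWeight_union_left hYZ]
  have union_ge := (h.isExtremal i).neg_discrepancy_le hi
    (union_subset (h.subset le_rfl) <| union_subset (h.subset hij.le) <|
      union_subset (h.subset hil.le) (h.subset (hij.trans hjm).le))
  rw [discrepancy_union hw hi_disj, discrepancy_union hw hj_disj, discrepancy_union hw hlm_disj,
    pairWeight_union_right _ hj_disj, pairWeight_union_right _ hlm_disj,
    pairWeight_union_right _ hlm_disj] at union_ge
  linarith [h.two_mul_pairWeight_le hw hij hi, h.two_mul_pairWeight_le hw hil hi,
    h.two_mul_pairWeight_le hw (hij.trans hjm) hi, h.two_mul_pairWeight_le hw hjl hj,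
    h.two_mul_pairWeight_le hw hjm hj, h.two_mul_pairWeight_le hw hlm hl,
    (h.isExtremal l).discrepancy_le hl (h.subset hlm.le)]

theorem three_mul_abs_discrepancy_add_six_le (h : IsPeeling w U X)
    (hw : ∀ x y, w x y = w y x) (a : ℕ) :
    3 * |discrepancy w (X (a + 6))| ≤ 2 * |discrepancy w (X a)| := by
  obtain ⟨g, sign, hg⟩ := exists_orderEmbedding_forall_eq (n := 3) (Icc a (a + 6))
    (fun i ↦ 0 ≤ discrepancy w (X i)) (by rw [Fintype.card_prop, Nat.card_Icc]; omega)
  have h01 : g 0 < g 1 := g.strictMono (by decide)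
  have h12 : g 1 < g 2 := g.strictMono (by decide)
  have h23 : g 2 < g 3 := g.strictMono (by decide)
  have key : 3 * |discrepancy w (X (g 3))| ≤ 2 * |discrepancy w (X (g 0))| := by
    by_cases hs : sign
    · have nonneg (t) : 0 ≤ discrepancy w (X (g t)) := (hg t).2 ▸ hs
      rw [abs_of_nonneg (nonneg 3), abs_of_nonneg (nonneg 0)]
      exact h.three_mul_discrepancy_le hw h01 h12 h23 (nonneg 0) (nonneg 1) (nonneg 2)
    · have neg_nonneg (t) : 0 ≤ discrepancy (-w) (X (g t)) := by
        rw [discrepancy_neg]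
        exact neg_nonneg.2 (le_of_not_ge ((hg t).2 ▸ hs))
      rw [← abs_neg, ← abs_neg (discrepancy w (X (g 0))), ← discrepancy_neg, ← discrepancy_neg,
        abs_of_nonneg (neg_nonneg 3), abs_of_nonneg (neg_nonneg 0)]
      exact h.neg.three_mul_discrepancy_le (fun x y ↦ congrArg Neg.neg (hw x y)) h01 h12 h23
        (neg_nonneg 0) (neg_nonneg 1) (neg_nonneg 2)
  have last_le := h.abs_discrepancy_antitone (mem_Icc.1 (hg 3).1).2
  have le_first := h.abs_discrepancy_antitone (mem_Icc.1 (hg 0).1).1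
  simp only at last_le le_first
  linarith

theorem three_pow_mul_abs_discrepancy_le (h : IsPeeling w U X) (hw : ∀ x y, w x y = w y x)
    (n : ℕ) : 3 ^ n * |discrepancy w (X (6 * n))| ≤ 2 ^ n * |discrepancy w (X 0)| := by
  induction n with
  | zero => simp only [pow_zero, mul_zero, le_refl]
  | succ n ih =>
    calc 3 ^ (n + 1) * |discrepancy w (X (6 * (n + 1)))|
        = 3 ^ n * (3 * |discrepancy w (X (6 * n + 6))|) := by
          rw [pow_succ, mul_assoc, mul_add_one]
      _ ≤ 3 ^ n * (2 * |discrepancy w (X (6 * n))|) := by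
          gcongr 3 ^ n * ?_
          exact h.three_mul_abs_discrepancy_add_six_le hw (6 * n)
      _ = 2 * (3 ^ n * |discrepancy w (X (6 * n))|) := mul_left_comm _ _ _
      _ ≤ 2 * (2 ^ n * |discrepancy w (X 0)|) := by gcongr
      _ = 2 ^ (n + 1) * |discrepancy w (X 0)| := by rw [← mul_assoc, pow_succ']

end IsPeeling

end Discrepancy

section ErdosPach

variable {V : Type*} [DecidableEq V] (G : SimpleGraph V) [DecidableRel G.Adj]

/-- The weight `1` on edges, `-1` on non-edges and `0` on the diagonal, that is, the negative of
the Seidel matrix of `G`. -/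
def edgeSign (x y : V) : ℤ :=
  (if G.Adj x y then 1 else 0) - if Gᶜ.Adj x y then 1 else 0

theorem edgeSign_comm (x y : V) : edgeSign G x y = edgeSign G y x := by
  simp only [edgeSign, SimpleGraph.adj_comm]

theorem edgeSign_self (x : V) : edgeSign G x x = 0 := by
  simp only [edgeSign, SimpleGraph.irrefl, if_false, sub_self]

theorem edgeSign_compl : edgeSign Gᶜ = -edgeSign G := by
  ext x y
  simp only [edgeSign, compl_compl, Pi.neg_apply, neg_sub]

theorem abs_edgeSign_of_ne {x y : V} (h : x ≠ y) : |edgeSign G x y| = 1 := by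
  by_cases hxy : G.Adj x y <;> simp [edgeSign, hxy, h]

theorem abs_edgeSign_le_one (x y : V) : |edgeSign G x y| ≤ 1 := by
  obtain rfl | h := eq_or_ne x y
  · simp only [edgeSign_self, abs_zero, zero_le_one]
  · exact (abs_edgeSign_of_ne G h).le

theorem sum_edgeSign (W : Finset V) (v : V) :
    ∑ u ∈ W, edgeSign G v u = #{u ∈ W | G.Adj v u} - #{u ∈ W | Gᶜ.Adj v u} := by
  simp only [edgeSign, sum_sub_distrib, sum_boole]

theorem abs_discrepancy_edgeSign_le (X : Finset V) : |discrepancy (edgeSign G) X| ≤ #X ^ 2 := by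
  calc |discrepancy (edgeSign G) X|
      ≤ ∑ x ∈ X, ∑ y ∈ X, |edgeSign G x y| :=
        (abs_sum_le_sum_abs _ _).trans (sum_le_sum fun _ _ ↦ abs_sum_le_sum_abs _ _)
    _ ≤ ∑ x ∈ X, ∑ y ∈ X, 1 :=
        sum_le_sum fun x _ ↦ sum_le_sum fun y _ ↦ abs_edgeSign_le_one G x y
    _ = #X ^ 2 := by simp only [sum_const, nsmul_eq_mul, mul_one, sq]

theorem abs_discrepancy_edgeSign_pair {x y : V} (h : x ≠ y) :
    |discrepancy (edgeSign G) {x, y}| = 2 := by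
  simp only [discrepancy, pairWeight, sum_pair h, edgeSign_self, edgeSign_comm G y x, zero_add,
    add_zero, ← two_mul, abs_mul, abs_edgeSign_of_ne G h, abs_two, mul_one]

theorem exists_isExtremal_self_of_two_pow_mul_sq_lt {k n : ℕ} (hkn : 2 ^ n * k ^ 2 < 3 ^ n)
    {U : Finset V} (hU : 6 * n * k + 2 ≤ #U) :
    ∃ W ⊆ U, k ≤ #W ∧ IsExtremal (edgeSign G) W W := by
  obtain ⟨T, X, rfl, hTX⟩ := exists_isPeeling (edgeSign G) U
  by_cases large : ∃ i, k ≤ #(X i)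
  · obtain ⟨i, hi⟩ := large
    exact ⟨X i, hTX.subset i.zero_le, hi, (hTX.isExtremal i).self⟩
  · push Not at large
    have one_lt_card : 1 < #(T (6 * n)) := by
      linarith [hTX.card_le_card_add (fun i ↦ (large i).le) (6 * n)]
    obtain ⟨x, hx, y, hy, hxy⟩ := Finset.one_lt_card.1 one_lt_card
    have one_le_abs : 1 ≤ |discrepancy (edgeSign G) (X (6 * n))| := by
      linarith [abs_discrepancy_edgeSign_pair G hxy, (hTX.isExtremal (6 * n)).abs_discrepancy_le
        (insert_subset hx (singleton_subset_iff.2 hy))]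
    have three_pow_le : (3 ^ n : ℤ) ≤ 2 ^ n * k ^ 2 := by
      calc (3 ^ n : ℤ) ≤ 3 ^ n * |discrepancy (edgeSign G) (X (6 * n))| :=
            le_mul_of_one_le_right (by positivity) one_le_abs
        _ ≤ 2 ^ n * |discrepancy (edgeSign G) (X 0)| :=
            hTX.three_pow_mul_abs_discrepancy_le (edgeSign_comm G) n
        _ ≤ 2 ^ n * #(X 0) ^ 2 := by gcongr; exact abs_discrepancy_edgeSign_le G (X 0)
        _ ≤ 2 ^ n * k ^ 2 := by gcongr; exact (large 0).le
    exact absurd hkn (not_lt.2 (by exact_mod_cast three_pow_le))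

variable {G} in
theorem IsExtremal.half_card_sub_one_le_card_filter_adj {W : Finset V}
    (h : IsExtremal (edgeSign G) W W) (hW : 0 ≤ discrepancy (edgeSign G) W) {v : V} (hv : v ∈ W) :
    (1 / 2 : ℝ) * (#W - 1) ≤ #{u ∈ W | G.Adj v u} := by
  have compl_le := h.sum_weight_nonneg (edgeSign_comm G) hW hv (edgeSign_self G v)
  rw [sum_edgeSign, sub_nonneg] at compl_le
  have compl_le' : (#{u ∈ W | Gᶜ.Adj v u} : ℝ) ≤ #{u ∈ W | G.Adj v u} := by
    exact_mod_cast compl_le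
  have degree_add : (#{u ∈ W | G.Adj v u} : ℝ) + #{u ∈ W | Gᶜ.Adj v u} = #W - 1 := by
    rw [← cast_card_erase_of_mem hv]
    exact_mod_cast card_filter_adj_add_card_filter_compl_adj G W v
  linarith

open Real in
theorem exists_two_pow_mul_sq_lt_three_pow {k N : ℕ} (hk : 2 ≤ k) (hN : 50 * k * log k ≤ N) :
    ∃ n : ℕ, 2 ^ n * k ^ 2 < 3 ^ n ∧ 6 * n * k + 2 ≤ N := by
  have hk' : (2 : ℝ) ≤ k := by exact_mod_cast hk
  have log_ge : 0.69 ≤ log k := by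
    linarith [log_two_gt_d9, log_le_log two_pos hk']
  have log_three_halves : 1 / 3 ≤ log (3 / 2) := by
    linarith [one_sub_inv_le_log_of_pos (show (0 : ℝ) < 3 / 2 by norm_num)]
  refine ⟨⌊6 * log k⌋₊ + 1, ?_, ?_⟩
  · have sq_lt : (k : ℝ) ^ 2 < (3 / 2) ^ (⌊6 * log k⌋₊ + 1) := by
      rw [← log_lt_log_iff (by positivity) (by positivity), log_pow, log_pow]
      push_cast
      nlinarith [Nat.lt_floor_add_one (6 * log k)]
    rw [div_pow, lt_div_iff₀' (by positivity)] at sq_lt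
    exact_mod_cast sq_lt
  · have floor_le : (⌊6 * log k⌋₊ : ℝ) ≤ 6 * log k := Nat.floor_le (by positivity)
    have : 6 * ((⌊6 * log k⌋₊ : ℝ) + 1) * k + 2 ≤ N := by nlinarith
    exact_mod_cast this

open Real in
theorem exists_large_subset_forall_half_le_card_filter_adj_or_compl {k : ℕ} (hk : 2 ≤ k)
    {U : Finset V} (hU : 50 * k * log k ≤ #U) :
    ∃ W ⊆ U, k ≤ #W ∧
      ((∀ v ∈ W, (1 / 2 : ℝ) * (#W - 1) ≤ #{u ∈ W | G.Adj v u}) ∨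
        ∀ v ∈ W, (1 / 2 : ℝ) * (#W - 1) ≤ #{u ∈ W | Gᶜ.Adj v u}) := by
  obtain ⟨n, hkn, hnU⟩ := exists_two_pow_mul_sq_lt_three_pow hk hU
  obtain ⟨W, hWU, hkW, hW⟩ := exists_isExtremal_self_of_two_pow_mul_sq_lt G hkn hnU
  refine ⟨W, hWU, hkW, (le_total 0 (discrepancy (edgeSign G) W)).imp (fun nonneg v hv ↦ ?_)
    fun nonpos v hv ↦ ?_⟩
  · exact hW.half_card_sub_one_le_card_filter_adj nonneg hv
  · refine IsExtremal.half_card_sub_one_le_card_filter_adj ?_ ?_ hv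
    · exact edgeSign_compl G ▸ hW.neg
    · rwa [edgeSign_compl, discrepancy_neg, neg_nonneg]

end ErdosPach

open Real in
theorem fixed_quasi_ramsey_klogk_general {V : Type*} [DecidableEq V] (G : SimpleGraph V)
    [DecidableRel G.Adj] {k : ℕ} (hk : 2 ≤ k) {U : Finset V} (hU : 50 * k * log k ≤ #U) :
    ∃ S ⊆ U, #S = k ∧
      ((∀ v ∈ S, 1 / 2 * (k - 1) - √((k - 1) * log k / 2) ≤ #{u ∈ S | G.Adj v u}) ∨
        ∀ v ∈ S, 1 / 2 * (k - 1) - √((k - 1) * log k / 2) ≤ #{u ∈ S | Gᶜ.Adj v u}) := by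
  have half_mem : (1 / 2 : ℝ) ∈ Set.Icc 0 1 := by norm_num
  obtain ⟨W, hWU, hkW, hW | hW⟩ :=
    exists_large_subset_forall_half_le_card_filter_adj_or_compl G hk hU
  · obtain ⟨S, hSW, hSk, hS⟩ :=
      exists_subset_forall_sub_sqrt_le_card_filter_adj G half_mem hW hk hkW
    exact ⟨S, hSW.trans hWU, hSk, .inl hS⟩
  · obtain ⟨S, hSW, hSk, hS⟩ :=
      exists_subset_forall_sub_sqrt_le_card_filter_adj Gᶜ half_mem hW hk hkW
    exact ⟨S, hSW.trans hWU, hSk, .inr hS⟩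

theorem sqrt_half_le_two_mul_sqrt (x : ℝ) : √(x / 2) ≤ 2 * √x := by
  rw [Real.sqrt_div' x zero_le_two]
  linarith [div_le_self (Real.sqrt_nonneg x) (Real.one_le_sqrt.2 one_le_two), Real.sqrt_nonneg x]

theorem fixed_quasi_ramsey_klogk :
    ∃ C : ℝ, 0 < C ∧ ∀ᶠ k : ℕ in Filter.atTop, ∀ N : ℕ,
      C * (k : ℝ) * Real.log (k : ℝ) ≤ (N : ℝ) →
      ∀ G : SimpleGraph (Fin N), ∃ S : Finset (Fin N), S.card = k ∧
        ((∀ v ∈ S,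
            ((k : ℝ) - 1) / 2 - 2 * Real.sqrt (((k : ℝ) - 1) * Real.log (k : ℝ)) ≤
              ((S.filter (G.Adj v)).card : ℝ)) ∨
         (∀ v ∈ S,
            ((k : ℝ) - 1) / 2 - 2 * Real.sqrt (((k : ℝ) - 1) * Real.log (k : ℝ)) ≤
              ((S.filter (Gᶜ.Adj v)).card : ℝ))) := by
  refine ⟨50, by norm_num, Filter.eventually_atTop.2 ⟨2, fun k hk N hN G ↦ ?_⟩⟩
  obtain ⟨S, -, hSk, hS⟩ := fixed_quasi_ramsey_klogk_general G hk (U := univ) (by simpa using hN)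
  exact ⟨S, hSk, hS.imp
    (fun h v hv ↦ by linarith [h v hv, sqrt_half_le_two_mul_sqrt ((k - 1) * Real.log k)])
    fun h v hv ↦ by linarith [h v hv, sqrt_half_le_two_mul_sqrt ((k - 1) * Real.log k)]⟩
end
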